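/- arXiv:0912.3844 — 3 statements merged into one kernel-verified Lean document; each statement's English description precedes it below -/
import Mathlib

section
/- For every real a > 0, the improper integral lim_{T→∞} ∫₁^T sin(a·x) · (ln x)/x dx exists and equals −(π/2)·(γ + ln a) + a · Σ_{n=0}^∞ (−1)^n · a^{2n} / ((2n+1)! · (2n+1)²), where γ is the Euler–Mascheroni constant. -/
open MeasureTheory Filter

/-!
The Laplace transform of `log t + γ` is `-log x / x`, because `∫ log t * exp (-t) = Γ'(1) = -γ`.
Integrating this identity against `sin (a * x)` over `[0, T]` and exchanging the integrals replaces
`exp (-x * t)` by the truncated Laplace transform of the sine. As `T → ∞` that tends to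
`a / (a ^ 2 + t ^ 2)`, under a bound uniform in `T`. Hence the integral over `[0, ∞)` is
`-∫ (log t + γ) * a / (a ^ 2 + t ^ 2) = -(π / 2) * (γ + log a)`; the logarithmic integral is
evaluated by the symmetry `t ↦ t⁻¹`. Over `[0, 1]` the sine is expanded in its power series.
-/

open Real Set Asymptotics Topology

section LogIntegrals

theorem integrableOn_log_mul_of_isBigO_rpow {f : ℝ → ℝ} {p q : ℝ}
    (hf : LocallyIntegrableOn f (Ioi 0)) (hf_top : f =O[atTop] (· ^ (-p))) (hp : 1 < p)
    (hf_zero : f =O[𝓝[>] 0] (· ^ (-q))) (hq : q < 1) :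
    IntegrableOn (fun t ↦ log t * f t) (Ioi 0) := by
  obtain ⟨p', hp', hpp'⟩ := exists_between hp
  obtain ⟨q', hqq', hq'⟩ := exists_between hq
  have hlog : ContinuousOn log (Ioi 0) := continuousOn_log.mono fun _ ht ↦ (mem_Ioi.1 ht).ne'
  have hloc : LocallyIntegrableOn (fun t ↦ log t * f t) (Ioi 0) :=
    hf.continuousOn_mul hlog isOpen_Ioi.isLocallyClosed
  simpa using mellin_convergent_of_isBigO_scalar hloc
    (isBigO_rpow_top_log_smul hpp' hf_top) hp' (isBigO_rpow_zero_log_smul hqq' hf_zero) hq'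

theorem integrableOn_log_mul_exp_neg_Ioi :
    IntegrableOn (fun t ↦ log t * exp (-t)) (Ioi 0) := by
  refine integrableOn_log_mul_of_isBigO_rpow (p := 2) (q := 0) ?_ ?_ one_lt_two ?_ zero_lt_one
  · exact (by fun_prop : Continuous fun t : ℝ ↦ exp (-t)).continuousOn.locallyIntegrableOn
      measurableSet_Ioi
  · simpa only [neg_one_mul] using (isLittleO_exp_neg_mul_rpow_atTop zero_lt_one (-2)).isBigO
  · simp only [neg_zero, rpow_zero]
    exact (by fun_prop : ContinuousAt (fun t : ℝ ↦ exp (-t)) 0).continuousWithinAt.isBigO_one ℝ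

theorem integral_log_mul_exp_neg_Ioi :
    ∫ t in Ioi (0 : ℝ), log t * exp (-t) = -eulerMascheroniConstant := by
  have hderiv : HasDerivAt Complex.Gamma
      (∫ t : ℝ in Ioi 0, (t : ℂ) ^ ((1 : ℂ) - 1) * (log t * exp (-t))) 1 := by
    refine (Complex.hasDerivAt_GammaIntegral (by simp)).congr_of_eventuallyEq ?_
    filter_upwards [(isOpen_lt continuous_const Complex.continuous_re).mem_nhds
      (by simp : (0 : ℝ) < Complex.re 1)] with s hs using Complex.Gamma_eq_integral hs
  have hvalue := hderiv.unique Complex.hasDerivAt_Gamma_one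
  simp only [sub_self, Complex.cpow_zero, one_mul, ← Complex.ofReal_mul,
    integral_complex_ofReal] at hvalue
  exact_mod_cast hvalue

theorem integral_exp_neg_mul_mul_log_add_eulerMascheroniConstant {x : ℝ} (hx : 0 < x) :
    ∫ t in Ioi (0 : ℝ), exp (-(x * t)) * (log t + eulerMascheroniConstant) = -(log x / x) := by
  set c := eulerMascheroniConstant - log x with hc
  calc
    _ = ∫ t in Ioi (0 : ℝ), (log (x * t) * exp (-(x * t)) + c * exp (-(x * t))) := by
      refine setIntegral_congr_fun measurableSet_Ioi fun t ht ↦ ?_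
      simp only [log_mul hx.ne' (mem_Ioi.1 ht).ne', hc]
      ring
    _ = x⁻¹ * ∫ u in Ioi (0 : ℝ), (log u * exp (-u) + c * exp (-u)) := by
      simpa only [mul_zero, smul_eq_mul] using
        integral_comp_mul_left_Ioi (fun u ↦ log u * exp (-u) + c * exp (-u)) 0 hx
    _ = x⁻¹ * (-eulerMascheroniConstant + c) := by
      rw [integral_add integrableOn_log_mul_exp_neg_Ioi ((integrableOn_exp_neg_Ioi 0).const_mul c),
        integral_const_mul, integral_log_mul_exp_neg_Ioi, integral_exp_neg_Ioi_zero, mul_one]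
    _ = -(log x / x) := by
      rw [hc]
      ring

theorem continuous_inv_sq_add_sq {c : ℝ} (hc : c ≠ 0) :
    Continuous fun t : ℝ ↦ (c ^ 2 + t ^ 2)⁻¹ :=
  Continuous.inv₀ (by fun_prop) fun t ↦ by positivity

theorem inv_sq_add_sq_isBigO_rpow_neg_two (c : ℝ) :
    (fun t : ℝ ↦ (c ^ 2 + t ^ 2)⁻¹) =O[atTop] (· ^ (-2 : ℝ)) := by
  refine IsBigO.of_bound' ?_
  filter_upwards [eventually_gt_atTop 0] with t ht
  rw [rpow_neg ht.le, rpow_two, norm_of_nonneg (by positivity), norm_of_nonneg (by positivity)]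
  gcongr
  exact le_add_of_nonneg_left (sq_nonneg c)

theorem integrableOn_log_div_sq_add_sq_Ioi {c : ℝ} (hc : c ≠ 0) :
    IntegrableOn (fun t ↦ log t / (c ^ 2 + t ^ 2)) (Ioi 0) := by
  have hcont := continuous_inv_sq_add_sq hc
  simp only [div_eq_mul_inv]
  refine integrableOn_log_mul_of_isBigO_rpow (p := 2) (q := 0)
    (hcont.continuousOn.locallyIntegrableOn measurableSet_Ioi)
    (inv_sq_add_sq_isBigO_rpow_neg_two c) one_lt_two ?_ zero_lt_one
  simp only [neg_zero, rpow_zero]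
  exact hcont.continuousAt.continuousWithinAt.isBigO_one ℝ

theorem inv_sq_add_sq_comp_mul_left (c t : ℝ) :
    (c ^ 2 + (c * t) ^ 2)⁻¹ = (c ^ 2)⁻¹ * (1 + t ^ 2)⁻¹ := by
  rw [← mul_inv]
  ring

theorem integrableOn_inv_sq_add_sq_Ioi {c : ℝ} (hc : c ≠ 0) :
    IntegrableOn (fun t ↦ (c ^ 2 + t ^ 2)⁻¹) (Ioi 0) := by
  have h := integrableOn_Ioi_comp_mul_left_iff (fun t : ℝ ↦ (|c| ^ 2 + t ^ 2)⁻¹) 0 (abs_pos.2 hc)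
  simp only [inv_sq_add_sq_comp_mul_left, mul_zero] at h
  simpa only [sq_abs] using h.1 (integrable_inv_one_add_sq.integrableOn.const_mul _)

theorem integral_Ioi_inv_sq_add_sq {c : ℝ} (hc : 0 < c) :
    ∫ t in Ioi (0 : ℝ), (c ^ 2 + t ^ 2)⁻¹ = π / (2 * c) := by
  have h := integral_comp_mul_left_Ioi (fun t : ℝ ↦ (c ^ 2 + t ^ 2)⁻¹) 0 hc
  simp only [inv_sq_add_sq_comp_mul_left, integral_const_mul, mul_zero, smul_eq_mul,
    integral_Ioi_inv_one_add_sq, arctan_zero, sub_zero] at h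
  field_simp at h ⊢
  linarith

theorem integral_Ioi_log_div_one_add_sq :
    ∫ t in Ioi (0 : ℝ), log t / (1 + t ^ 2) = 0 := by
  have hsubst := integral_comp_rpow_Ioi (fun t : ℝ ↦ log t / (1 + t ^ 2)) (p := -1) (by norm_num)
  have hodd : ∫ t in Ioi (0 : ℝ), (|(-1 : ℝ)| * t ^ ((-1 : ℝ) - 1)) •
      (log (t ^ (-1 : ℝ)) / (1 + (t ^ (-1 : ℝ)) ^ 2)) =
        ∫ t in Ioi (0 : ℝ), -(log t / (1 + t ^ 2)) := by
    refine setIntegral_congr_fun measurableSet_Ioi fun t (ht : 0 < t) ↦ ?_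
    have hpow : t ^ ((-1 : ℝ) - 1) = (t ^ 2)⁻¹ := by
      rw [← rpow_natCast, ← rpow_neg ht.le]
      norm_num
    simp only [hpow, rpow_neg_one, log_inv, smul_eq_mul, abs_neg, abs_one]
    field_simp
    ring
  rw [hodd, integral_neg] at hsubst
  linarith

theorem integral_Ioi_log_div_sq_add_sq {c : ℝ} (hc : 0 < c) :
    ∫ t in Ioi (0 : ℝ), log t / (c ^ 2 + t ^ 2) = π / (2 * c) * log c := by
  have hlog : IntegrableOn (fun t : ℝ ↦ log t / (1 + t ^ 2)) (Ioi 0) := by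
    simpa only [one_pow] using integrableOn_log_div_sq_add_sq_Ioi one_ne_zero
  have hscale : ∫ t in Ioi (0 : ℝ), log (c * t) / (c ^ 2 + (c * t) ^ 2) =
      ∫ t in Ioi (0 : ℝ), (c ^ 2)⁻¹ * (log t / (1 + t ^ 2) + log c * (1 + t ^ 2)⁻¹) := by
    refine setIntegral_congr_fun measurableSet_Ioi fun t (ht : 0 < t) ↦ ?_
    simp only [div_eq_mul_inv, inv_sq_add_sq_comp_mul_left, log_mul hc.ne' ht.ne']
    ring
  have hsubst := integral_comp_mul_left_Ioi (fun t : ℝ ↦ log t / (c ^ 2 + t ^ 2)) 0 hc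
  rw [hscale, integral_const_mul,
    integral_add hlog (integrable_inv_one_add_sq.integrableOn.const_mul _),
    integral_Ioi_log_div_one_add_sq, integral_const_mul, integral_Ioi_inv_one_add_sq,
    arctan_zero, mul_zero, smul_eq_mul] at hsubst
  field_simp at hsubst ⊢
  linarith

theorem integrableOn_log_add_const_div_sq_add_sq_Ioi {c : ℝ} (hc : c ≠ 0) (k : ℝ) :
    IntegrableOn (fun t ↦ (log t + k) / (c ^ 2 + t ^ 2)) (Ioi 0) := by
  simp only [add_div]
  exact (integrableOn_log_div_sq_add_sq_Ioi hc).add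
    ((integrableOn_inv_sq_add_sq_Ioi hc).const_mul k)

theorem integral_Ioi_div_sq_add_sq_mul_log_add_const {c : ℝ} (hc : 0 < c) (k : ℝ) :
    ∫ t in Ioi (0 : ℝ), c / (c ^ 2 + t ^ 2) * (log t + k) = π / 2 * (k + log c) := by
  calc
    _ = c * ∫ t in Ioi (0 : ℝ), (log t / (c ^ 2 + t ^ 2) + k * (c ^ 2 + t ^ 2)⁻¹) := by
      rw [← integral_const_mul]
      congr with t
      ring
    _ = c * (π / (2 * c) * log c + k * (π / (2 * c))) := by
      rw [integral_add (integrableOn_log_div_sq_add_sq_Ioi hc.ne')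
        ((integrableOn_inv_sq_add_sq_Ioi hc.ne').const_mul k), integral_const_mul,
        integral_Ioi_log_div_sq_add_sq hc, integral_Ioi_inv_sq_add_sq hc]
    _ = π / 2 * (k + log c) := by
      field_simp
      ring

end LogIntegrals

section SineLaplace

/-- The Laplace transform at `t` of `x ↦ sin (a * x)` truncated to `[0, T]`: the kernel that
results from integrating a Laplace transform against `sin (a * x)` over `[0, T]`. -/
noncomputable def truncatedSinLaplace (a T t : ℝ) : ℝ :=
  ∫ x in (0 : ℝ)..T, sin (a * x) * exp (-(x * t))

theorem continuous_truncatedSinLaplace (a T : ℝ) : Continuous (truncatedSinLaplace a T) :=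
  intervalIntegral.continuous_parametric_intervalIntegral_of_continuous'
    (f := fun t x ↦ sin (a * x) * exp (-(x * t))) (by fun_prop) 0 T

theorem truncatedSinLaplace_eq (a T : ℝ) {t : ℝ} (ht : t ≠ 0) :
    truncatedSinLaplace a T t =
      (a - exp (-(T * t)) * (a * cos (a * T) + t * sin (a * T))) / (a ^ 2 + t ^ 2) := by
  have hden : a ^ 2 + t ^ 2 ≠ 0 := by positivity
  have hderiv (x : ℝ) : HasDerivAt
      (fun x ↦ -exp (-(x * t)) * (a * cos (a * x) + t * sin (a * x)) / (a ^ 2 + t ^ 2))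
      (sin (a * x) * exp (-(x * t))) x := by
    have hax : HasDerivAt (a * ·) a x := hasDerivAt_const_mul a
    have hxt : HasDerivAt (fun x ↦ -(x * t)) (-t) x := (hasDerivAt_mul_const t).fun_neg
    refine ((hxt.exp.neg.mul ((hax.cos.const_mul a).add (hax.sin.const_mul t))).div_const
      (a ^ 2 + t ^ 2)).congr_deriv ?_
    simp only [Pi.neg_apply, Pi.add_apply]
    field_simp
    ring
  rw [truncatedSinLaplace, intervalIntegral.integral_eq_sub_of_hasDerivAt (fun x _ ↦ hderiv x)
    (Continuous.intervalIntegrable (by fun_prop) _ _)]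
  simp only [zero_mul, neg_zero, exp_zero, mul_zero, cos_zero, sin_zero]
  ring

theorem abs_truncatedSinLaplace_le (a : ℝ) {T t : ℝ} (hT : 1 ≤ T) (ht : 0 < t) :
    |truncatedSinLaplace a T t| ≤ (2 * |a| + 1) / (a ^ 2 + t ^ 2) := by
  have hexp : exp (-(T * t)) ≤ 1 := exp_le_one_iff.2 (by nlinarith)
  have hexp_mul : exp (-(T * t)) * t ≤ 1 := by
    rw [exp_neg, inv_mul_le_one₀ (exp_pos _)]
    nlinarith [add_one_le_exp (T * t)]
  have hcos : |exp (-(T * t)) * (a * cos (a * T))| ≤ |a| := by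
    rw [abs_mul, abs_mul, abs_exp]
    exact (mul_le_of_le_one_left (by positivity) hexp).trans
      (mul_le_of_le_one_right (abs_nonneg a) (abs_cos_le_one _))
  have hsin : |exp (-(T * t)) * t * sin (a * T)| ≤ 1 := by
    rw [abs_mul, abs_of_pos (by positivity)]
    exact mul_le_one₀ hexp_mul (abs_nonneg _) (abs_sin_le_one _)
  rw [truncatedSinLaplace_eq a T ht.ne', abs_div, abs_of_pos (by positivity : 0 < a ^ 2 + t ^ 2)]
  gcongr
  calc |a - exp (-(T * t)) * (a * cos (a * T) + t * sin (a * T))|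
      = |a - exp (-(T * t)) * (a * cos (a * T)) - exp (-(T * t)) * t * sin (a * T)| := by ring_nf
    _ ≤ |a| + |exp (-(T * t)) * (a * cos (a * T))| + |exp (-(T * t)) * t * sin (a * T)| :=
      (abs_sub _ _).trans (by gcongr; exact abs_sub _ _)
    _ ≤ 2 * |a| + 1 := by linarith

theorem tendsto_truncatedSinLaplace_atTop (a : ℝ) {t : ℝ} (ht : 0 < t) :
    Tendsto (truncatedSinLaplace a · t) atTop (𝓝 (a / (a ^ 2 + t ^ 2))) := by
  have hexp : Tendsto (fun T ↦ exp (-(T * t))) atTop (𝓝 0) :=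
    tendsto_exp_neg_atTop_nhds_zero.comp (tendsto_id.atTop_mul_const ht)
  have hbdd : IsBoundedUnder (· ≤ ·) atTop
      (norm ∘ fun T ↦ a * cos (a * T) + t * sin (a * T)) := by
    refine isBoundedUnder_of ⟨|a| + |t|, fun T ↦ (abs_add_le _ _).trans ?_⟩
    rw [abs_mul, abs_mul]
    gcongr
    · exact mul_le_of_le_one_right (abs_nonneg a) (abs_cos_le_one _)
    · exact mul_le_of_le_one_right (abs_nonneg t) (abs_sin_le_one _)
  simpa only [truncatedSinLaplace_eq a _ ht.ne', sub_zero] using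
    ((hexp.zero_mul_isBoundedUnder_le hbdd).const_sub a).div_const (a ^ 2 + t ^ 2)

theorem sq_mul_integral_mul_exp_neg_le_one {T t : ℝ} (hT : 0 ≤ T) (ht : 0 ≤ t) :
    t ^ 2 * ∫ x in (0 : ℝ)..T, x * exp (-(x * t)) ≤ 1 := by
  have hderiv (x : ℝ) : HasDerivAt (fun x ↦ -((1 + x * t) * exp (-(x * t))))
      (t ^ 2 * (x * exp (-(x * t)))) x := by
    have hxt : HasDerivAt (· * t) t x := hasDerivAt_mul_const t
    refine ((hxt.const_add 1).fun_mul hxt.fun_neg.exp).fun_neg.congr_deriv ?_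
    ring
  rw [← intervalIntegral.integral_const_mul, intervalIntegral.integral_eq_sub_of_hasDerivAt
    (fun x _ ↦ hderiv x) (Continuous.intervalIntegrable (by fun_prop) _ _)]
  have : 0 ≤ (1 + T * t) * exp (-(T * t)) := by positivity
  simpa using this

theorem integral_mul_exp_neg_le_sq {T t : ℝ} (hT : 0 ≤ T) (ht : 0 ≤ t) :
    ∫ x in (0 : ℝ)..T, x * exp (-(x * t)) ≤ T ^ 2 := by
  calc ∫ x in (0 : ℝ)..T, x * exp (-(x * t)) ≤ ∫ _ in (0 : ℝ)..T, T := by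
        refine intervalIntegral.integral_mono_on hT
          (Continuous.intervalIntegrable (by fun_prop) _ _) intervalIntegrable_const fun x hx ↦ ?_
        exact (mul_le_of_le_one_right hx.1
          (exp_le_one_iff.2 (neg_nonpos.2 (mul_nonneg hx.1 ht)))).trans hx.2
    _ = T ^ 2 := by simp [sq]

-- The estimate `|sin| ≤ 1` would only give decay `1 / t`, which is not integrable against `log t`;
-- `|sin (a * x)| ≤ |a| * x` gains the second power of `t`.
theorem integral_abs_sin_mul_exp_neg_le (a : ℝ) {T t : ℝ} (hT : 0 ≤ T) (ht : 0 < t) :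
    ∫ x in (0 : ℝ)..T, |sin (a * x) * exp (-(x * t))| ≤
      |a| * (a ^ 2 * T ^ 2 + 1) / (a ^ 2 + t ^ 2) := by
  rw [le_div_iff₀ (by positivity), mul_comm]
  calc (a ^ 2 + t ^ 2) * ∫ x in (0 : ℝ)..T, |sin (a * x) * exp (-(x * t))|
      ≤ (a ^ 2 + t ^ 2) * ∫ x in (0 : ℝ)..T, |a| * (x * exp (-(x * t))) := by
        gcongr
        refine intervalIntegral.integral_mono_on hT
          (Continuous.intervalIntegrable (by fun_prop) _ _)
          (Continuous.intervalIntegrable (by fun_prop) _ _) fun x hx ↦ ?_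
        rw [abs_mul, abs_exp, ← mul_assoc]
        gcongr
        simpa only [abs_mul, abs_of_nonneg hx.1] using abs_sin_le_abs (x := a * x)
    _ = |a| * (a ^ 2 * (∫ x in (0 : ℝ)..T, x * exp (-(x * t))) +
          t ^ 2 * ∫ x in (0 : ℝ)..T, x * exp (-(x * t))) := by
        rw [intervalIntegral.integral_const_mul]
        ring
    _ ≤ |a| * (a ^ 2 * T ^ 2 + 1) := by
        gcongr
        · exact integral_mul_exp_neg_le_sq hT ht.le
        · exact sq_mul_integral_mul_exp_neg_le_one hT ht.le

variable {w : ℝ → ℝ} {a : ℝ}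

theorem aestronglyMeasurable_of_integrableOn_div_sq_add_sq
    (hw : IntegrableOn (fun t ↦ w t / (a ^ 2 + t ^ 2)) (Ioi 0)) :
    AEStronglyMeasurable w (volume.restrict (Ioi 0)) := by
  have hmul : AEStronglyMeasurable (fun t ↦ w t / (a ^ 2 + t ^ 2) * (a ^ 2 + t ^ 2))
      (volume.restrict (Ioi 0)) :=
    hw.aestronglyMeasurable.mul (by fun_prop)
  refine hmul.congr ?_
  filter_upwards [ae_restrict_mem measurableSet_Ioi] with t (ht : 0 < t)
  exact div_mul_cancel₀ _ (by positivity)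

theorem integrable_sin_mul_exp_neg_mul_prod
    (hw : IntegrableOn (fun t ↦ w t / (a ^ 2 + t ^ 2)) (Ioi 0)) {T : ℝ} (hT : 0 ≤ T) :
    Integrable (Function.uncurry fun x t ↦ sin (a * x) * exp (-(x * t)) * w t)
      ((volume.restrict (Ioc 0 T)).prod (volume.restrict (Ioi 0))) := by
  have hkernel : Continuous fun p : ℝ × ℝ ↦ sin (a * p.1) * exp (-(p.1 * p.2)) := by fun_prop
  have hmeas : AEStronglyMeasurable
      (Function.uncurry fun x t ↦ sin (a * x) * exp (-(x * t)) * w t)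
      ((volume.restrict (Ioc 0 T)).prod (volume.restrict (Ioi 0))) :=
    hkernel.aestronglyMeasurable.mul
      (aestronglyMeasurable_of_integrableOn_div_sq_add_sq hw).comp_snd
  refine (integrable_prod_iff' hmeas).2 ⟨Eventually.of_forall fun t ↦ ?_, ?_⟩
  · exact Continuous.integrableOn_Ioc (f := fun x ↦ sin (a * x) * exp (-(x * t)) * w t)
      (by fun_prop)
  · refine (hw.norm.const_mul (|a| * (a ^ 2 * T ^ 2 + 1))).mono'
      hmeas.norm.prod_swap.integral_prod_right' ?_
    filter_upwards [ae_restrict_mem measurableSet_Ioi] with t (ht : 0 < t)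
    simp only [Function.uncurry_apply_pair, norm_mul _ (w t), integral_mul_const]
    rw [norm_mul, norm_norm, norm_div, norm_of_nonneg (by positivity : 0 ≤ a ^ 2 + t ^ 2),
      mul_div_left_comm, mul_comm]
    gcongr
    rw [norm_of_nonneg (integral_nonneg fun _ ↦ norm_nonneg _),
      ← intervalIntegral.integral_of_le hT]
    exact integral_abs_sin_mul_exp_neg_le a hT ht

theorem integral_sin_mul_laplace
    (hw : IntegrableOn (fun t ↦ w t / (a ^ 2 + t ^ 2)) (Ioi 0)) {T : ℝ} (hT : 0 ≤ T) :
    ∫ x in (0 : ℝ)..T, sin (a * x) * ∫ t in Ioi (0 : ℝ), exp (-(x * t)) * w t =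
      ∫ t in Ioi (0 : ℝ), truncatedSinLaplace a T t * w t := by
  simp only [truncatedSinLaplace, intervalIntegral.integral_of_le hT, ← integral_mul_const,
    ← integral_const_mul, ← mul_assoc]
  exact integral_integral_swap (integrable_sin_mul_exp_neg_mul_prod hw hT)

theorem tendsto_integral_sin_mul_laplace
    (hw : IntegrableOn (fun t ↦ w t / (a ^ 2 + t ^ 2)) (Ioi 0)) :
    Tendsto (fun T ↦ ∫ x in (0 : ℝ)..T, sin (a * x) * ∫ t in Ioi (0 : ℝ), exp (-(x * t)) * w t)
      atTop (𝓝 (∫ t in Ioi (0 : ℝ), a / (a ^ 2 + t ^ 2) * w t)) := by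
  have hlim : Tendsto (fun T ↦ ∫ t in Ioi (0 : ℝ), truncatedSinLaplace a T t * w t) atTop
      (𝓝 (∫ t in Ioi (0 : ℝ), a / (a ^ 2 + t ^ 2) * w t)) := by
    refine tendsto_integral_filter_of_dominated_convergence
      (fun t ↦ (2 * |a| + 1) * ‖w t / (a ^ 2 + t ^ 2)‖) ?_ ?_ (hw.norm.const_mul _) ?_
    · exact Eventually.of_forall fun T ↦
        (continuous_truncatedSinLaplace a T).aestronglyMeasurable.mul
          (aestronglyMeasurable_of_integrableOn_div_sq_add_sq hw)
    · filter_upwards [eventually_ge_atTop 1] with T hT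
      filter_upwards [ae_restrict_mem measurableSet_Ioi] with t (ht : 0 < t)
      rw [norm_mul, norm_div, norm_of_nonneg (by positivity : 0 ≤ a ^ 2 + t ^ 2),
        mul_div_left_comm, mul_comm]
      gcongr
      exact abs_truncatedSinLaplace_le a hT ht
    · filter_upwards [ae_restrict_mem measurableSet_Ioi] with t ht
      exact (tendsto_truncatedSinLaplace_atTop a ht).mul_const (w t)
  refine hlim.congr' ?_
  filter_upwards [eventually_ge_atTop 0] with T hT using (integral_sin_mul_laplace hw hT).symm

end SineLaplace

section SinMulLogDiv

theorem tendsto_integral_sin_mul_log_div {a : ℝ} (ha : 0 < a) :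
    Tendsto (fun T ↦ ∫ x in (0 : ℝ)..T, sin (a * x) * log x / x) atTop
      (𝓝 (-(π / 2) * (eulerMascheroniConstant + log a))) := by
  have hlim := (tendsto_integral_sin_mul_laplace
    (integrableOn_log_add_const_div_sq_add_sq_Ioi ha.ne' eulerMascheroniConstant)).neg
  rw [integral_Ioi_div_sq_add_sq_mul_log_add_const ha, ← neg_mul] at hlim
  refine hlim.congr' ?_
  filter_upwards [eventually_ge_atTop 0] with T hT
  rw [← intervalIntegral.integral_neg]
  refine intervalIntegral.integral_congr_Ioo_of_le hT fun x hx ↦ ?_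
  simp only [integral_exp_neg_mul_mul_log_add_eulerMascheroniConstant hx.1]
  ring

theorem integral_pow_mul_log (n : ℕ) :
    ∫ x in (0 : ℝ)..1, x ^ n * log x = -1 / ((n : ℝ) + 1) ^ 2 := by
  let F : ℝ → ℝ := fun x ↦ x ^ (n + 1) * log x / (n + 1) - x ^ (n + 1) / ((n : ℝ) + 1) ^ 2
  have hcont : Continuous F := by
    have := continuous_mul_log
    simp only [F, pow_succ, mul_assoc]
    fun_prop
  have hderiv (x : ℝ) (hx : x ∈ Ioo 0 1) : HasDerivAt F (x ^ n * log x) x := by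
    have hpow : HasDerivAt (· ^ (n + 1)) (((n : ℝ) + 1) * x ^ n) x := by
      exact_mod_cast hasDerivAt_pow (n + 1) x
    have hx0 : x ≠ 0 := hx.1.ne'
    refine (((hpow.fun_mul (hasDerivAt_log hx0)).div_const ((n : ℝ) + 1)).fun_sub
      (hpow.div_const (((n : ℝ) + 1) ^ 2))).congr_deriv ?_
    field_simp
    ring
  rw [intervalIntegral.integral_eq_sub_of_hasDerivAt_of_le zero_le_one hcont.continuousOn hderiv
    (intervalIntegral.intervalIntegrable_log'.continuousOn_mul (by fun_prop))]
  simp [F, neg_div]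

-- This includes `x = 0`, where `log 0 = 0` makes both sides vanish.
theorem sin_mul_log_div_eq (a x : ℝ) :
    sin (a * x) * log x / x = a * sinc (a * x) * log x := by
  rcases eq_or_ne a 0 with rfl | ha
  · simp
  rcases eq_or_ne x 0 with rfl | hx
  · simp
  rw [sinc_of_ne_zero (mul_ne_zero ha hx)]
  field_simp

theorem intervalIntegrable_sin_mul_log_div (a u v : ℝ) :
    IntervalIntegrable (fun x ↦ sin (a * x) * log x / x) volume u v := by
  simp only [sin_mul_log_div_eq]
  have := continuous_sinc
  exact intervalIntegral.intervalIntegrable_log'.continuousOn_mul (by fun_prop)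

theorem hasSum_integral_sin_mul_log_div (a : ℝ) :
    HasSum (fun n : ℕ ↦ -(a * ((-1) ^ n * a ^ (2 * n) /
        ((2 * n + 1).factorial * (2 * n + 1 : ℝ) ^ 2))))
      (∫ x in (0 : ℝ)..1, sin (a * x) * log x / x) := by
  have h := intervalIntegral.hasSum_integral_of_dominated_convergence (μ := volume)
    (a := 0) (b := 1) (f := fun x ↦ sin (a * x) * log x / x)
    (F := fun (n : ℕ) x ↦
      (-1) ^ n * a ^ (2 * n + 1) / (2 * n + 1).factorial * (x ^ (2 * n) * log x))
    (fun n x ↦ |a| ^ (2 * n + 1) / (2 * n + 1).factorial * |log x|)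
    (fun n ↦ Measurable.aestronglyMeasurable (by fun_prop))
    (fun n ↦ Eventually.of_forall fun x hx ↦ ?_)
    (Eventually.of_forall fun x _ ↦ (hasSum_sinh |a|).summable.mul_right _) ?_
    (Eventually.of_forall fun x hx ↦ ?_)
  · refine h.congr_fun fun n ↦ ?_
    rw [intervalIntegral.integral_const_mul, integral_pow_mul_log]
    push_cast
    field_simp
    ring
  · rw [uIoc_of_le zero_le_one] at hx
    have habs : |x| ≤ 1 := by rw [abs_of_pos hx.1]; exact hx.2
    simp only [norm_mul, norm_div, norm_pow, norm_neg, norm_one, one_pow, one_mul, norm_eq_abs,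
      Nat.abs_cast]
    gcongr
    exact mul_le_of_le_one_left (abs_nonneg _) (pow_le_one₀ (abs_nonneg x) habs)
  · simp only [tsum_mul_right]
    exact intervalIntegral.intervalIntegrable_log'.abs.const_mul _
  · rw [uIoc_of_le zero_le_one] at hx
    have hx0 : x ≠ 0 := hx.1.ne'
    have hsin := (hasSum_sin (a * x)).mul_right (log x / x)
    rw [← mul_div_assoc] at hsin
    refine hsin.congr_fun fun n ↦ ?_
    rw [mul_pow, pow_succ x]
    field_simp

end SinMulLogDiv

/-- For every real `a > 0`, the improper integral `∫₁^∞ sin(ax) (ln x)/x dx` exists as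
`lim_{T→∞} ∫₁^T` and equals
`-(π/2)(γ + ln a) + a Σ_{n≥0} (-1)^n a^{2n}/((2n+1)! (2n+1)²)`. -/
theorem sin_log_integral_one_infty (a : ℝ) (ha : 0 < a) :
    Tendsto (fun T : ℝ => ∫ x in (1 : ℝ)..T, Real.sin (a * x) * Real.log x / x)
      atTop
      (nhds (-(Real.pi / 2) * (Real.eulerMascheroniConstant + Real.log a) +
        a * ∑' n : ℕ,
          (-1 : ℝ) ^ n * a ^ (2 * n) / ((2 * n + 1).factorial * (2 * n + 1 : ℝ) ^ 2))) := by
  have hzero_one := (hasSum_integral_sin_mul_log_div a).tsum_eq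
  rw [tsum_neg, tsum_mul_left] at hzero_one
  have hlim := (tendsto_integral_sin_mul_log_div ha).sub_const
    (∫ x in (0 : ℝ)..1, sin (a * x) * log x / x)
  simp only [intervalIntegral.integral_interval_sub_left
    (intervalIntegrable_sin_mul_log_div a 0 _) (intervalIntegrable_sin_mul_log_div a 0 1)] at hlim
  rwa [← hzero_one, sub_neg_eq_add] at hlim
end

section
/- For every real a > 0 and every real μ with 0 < μ < 1, the improper integral lim_{T→∞} ∫₀^T cos(a·x) · x^{μ−1} · ln x dx exists and equals (Γ(μ)/a^μ) · [ (ψ(μ) − ln a) · cos(μπ/2) − (π/2) · sin(μπ/2) ], where Γ is the real Gamma function and ψ(μ) = Γ'(μ)/Γ(μ) is the digamma function. -/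
open MeasureTheory Filter

/-!
For `0 < Re r` and `0 < Re s < 1`, the integral of `x ^ (s - 1) * exp (-(r * x))` over `(0, ∞)` is
`r ^ (-s) * Γ(s)`, and one integration by parts bounds its tail beyond `T` by
`T ^ (Re s - 1) * (1 + ‖s - 1‖ / (1 - Re s)) / ‖r‖`. This bound involves `‖r‖` rather than `Re r`,
so it persists as `r` tends to a nonzero point of the imaginary axis. There the truncated integrals
therefore still converge, locally uniformly in `s`, to the analytic function `r ^ (-s) * Γ(s)`, and
by Weierstrass so do their derivatives in `s`, which insert a factor `log x`. Taking `r = a * I` and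
real parts yields the cosine integral.
-/

open Set Topology

section LaplaceCpow

variable {r s : ℂ} {T : ℝ}

lemma norm_cexp_neg_mul_ofReal (r : ℂ) (x : ℝ) :
    ‖Complex.exp (-(r * x))‖ = Real.exp (-(r.re * x)) := by
  simp [Complex.norm_exp]

lemma norm_cexp_neg_mul_ofReal_le_one (hr : 0 ≤ r.re) {x : ℝ} (hx : 0 ≤ x) :
    ‖Complex.exp (-(r * x))‖ ≤ 1 := by
  rw [norm_cexp_neg_mul_ofReal]
  exact Real.exp_le_one_iff.mpr (neg_nonpos.mpr (mul_nonneg hr hx))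

lemma integrableOn_Ioi_cpow_mul_cexp_neg_mul (hr : 0 < r.re) (hT : 0 ≤ T)
    (hs : -1 < s.re ∨ T ≠ 0) :
    IntegrableOn (fun x : ℝ ↦ (x : ℂ) ^ s * Complex.exp (-(r * x))) (Ioi T) := by
  rcases lt_or_ge (-1) s.re with hs' | hs'
  · have hexp : Continuous fun x : ℝ ↦ Complex.exp (-(r * x)) := by fun_prop
    have hconv : MellinConvergent (fun x : ℝ ↦ Complex.exp (-(r * x))) (s + 1) := by
      refine mellinConvergent_of_isBigO_rpow_exp hr (b := 0)
        (hexp.locallyIntegrable.locallyIntegrableOn _) (.of_bound' (.of_forall fun x ↦ ?_))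
        (.of_bound' ?_) (by simpa using neg_lt_iff_pos_add.mp hs')
      · simp [norm_cexp_neg_mul_ofReal]
      · filter_upwards [self_mem_nhdsWithin] with x hx
        simpa using norm_cexp_neg_mul_ofReal_le_one hr.le (mem_Ioi.mp hx).le
    simp only [MellinConvergent, add_sub_cancel_right, smul_eq_mul] at hconv
    exact hconv.mono_set (Ioi_subset_Ioi hT)
  · have hT' : 0 < T := hT.lt_of_ne' (hs.resolve_left hs'.not_gt)
    have hexp : IntegrableOn (fun x : ℝ ↦ Complex.exp (-(r * x))) (Ioi T) := by
      simpa using integrableOn_exp_mul_complex_Ioi (a := -r) (by simpa using hr) T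
    have hpow : ContinuousOn (fun x : ℝ ↦ (x : ℂ) ^ s) (Ioi T) := fun x hx ↦
      (Complex.continuousAt_ofReal_cpow_const x s
        (.inr (hT'.trans hx).ne')).continuousWithinAt
    refine hexp.bdd_mul (c := T ^ s.re) (hpow.aestronglyMeasurable measurableSet_Ioi) ?_
    filter_upwards [ae_restrict_mem measurableSet_Ioi] with x hx
    rw [Complex.norm_cpow_eq_rpow_re_of_pos (hT'.trans hx)]
    exact Real.rpow_le_rpow_of_nonpos hT' (mem_Ioi.mp hx).le (by linarith)

lemma hasDerivAt_cpow_mul_cexp_neg_mul (r s : ℂ) {x : ℝ} (hx : 0 < x) :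
    HasDerivAt (fun x : ℝ ↦ (x : ℂ) ^ s * Complex.exp (-(r * x)))
      (s * ((x : ℂ) ^ (s - 1) * Complex.exp (-(r * x))) -
        r * ((x : ℂ) ^ s * Complex.exp (-(r * x)))) x := by
  have hpow : HasDerivAt (fun z : ℂ ↦ z ^ s) (s * (x : ℂ) ^ (s - 1)) x := by
    simpa using (hasDerivAt_id (x : ℂ)).cpow_const (c := s) (.inl hx)
  have hexp : HasDerivAt (fun z : ℂ ↦ Complex.exp (-(r * z)))
      (Complex.exp (-(r * x)) * -r) x := by
    simpa using (((hasDerivAt_id (x : ℂ)).const_mul r).neg).cexp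
  convert! (hpow.mul hexp).comp_ofReal using 1
  ring

lemma tendsto_cpow_mul_cexp_neg_mul_atTop (hr : 0 < r.re) (s : ℂ) :
    Tendsto (fun x : ℝ ↦ (x : ℂ) ^ s * Complex.exp (-(r * x))) atTop (𝓝 0) := by
  refine tendsto_zero_iff_norm_tendsto_zero.mpr
    ((tendsto_rpow_mul_exp_neg_mul_atTop_nhds_zero s.re r.re hr).congr' ?_)
  filter_upwards [eventually_gt_atTop 0] with x hx
  rw [norm_mul, Complex.norm_cpow_eq_rpow_re_of_pos hx, norm_cexp_neg_mul_ofReal, neg_mul]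

lemma mul_integral_Ioi_cpow_mul_cexp_neg_mul (hr : 0 < r.re) (hT : 0 ≤ T)
    (hs : 0 < s.re ∨ T ≠ 0) :
    r * ∫ x in Ioi T, (x : ℂ) ^ s * Complex.exp (-(r * x)) =
      (T : ℂ) ^ s * Complex.exp (-(r * T)) +
        s * ∫ x in Ioi T, (x : ℂ) ^ (s - 1) * Complex.exp (-(r * x)) := by
  have hcont : ContinuousWithinAt (fun x : ℝ ↦ (x : ℂ) ^ s * Complex.exp (-(r * x)))
      (Ici T) T :=
    ((Complex.continuousAt_ofReal_cpow_const T s hs).mul (by fun_prop)).continuousWithinAt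
  have hint := (integrableOn_Ioi_cpow_mul_cexp_neg_mul hr hT
    (hs.imp_left fun h ↦ by linarith)).const_mul r
  have hint' := (integrableOn_Ioi_cpow_mul_cexp_neg_mul (s := s - 1) hr hT
    (hs.imp_left fun h ↦ by simpa using h)).const_mul s
  have hFTC := integral_Ioi_of_hasDerivAt_of_tendsto hcont
    (fun x hx ↦ hasDerivAt_cpow_mul_cexp_neg_mul r s (hT.trans_lt hx))
    (hint'.sub hint) (tendsto_cpow_mul_cexp_neg_mul_atTop hr s)
  rw [integral_sub hint' hint, integral_const_mul, integral_const_mul] at hFTC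
  linear_combination -hFTC

lemma hasDerivAt_integral_Ioi_cpow_mul_cexp_neg_mul (hr : 0 < r.re) (hs : 0 < s.re) :
    HasDerivAt (fun r : ℂ ↦ ∫ x in Ioi (0 : ℝ), (x : ℂ) ^ (s - 1) * Complex.exp (-(r * x)))
      (-∫ x in Ioi (0 : ℝ), (x : ℂ) ^ s * Complex.exp (-(r * x))) r := by
  obtain ⟨δ, hδ, hδr⟩ := exists_between hr
  have hU : {z : ℂ | δ < z.re} ∈ 𝓝 r :=
    (isOpen_lt continuous_const Complex.continuous_re).mem_nhds hδr
  have hint {z : ℂ} (hz : 0 < z.re) :=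
    integrableOn_Ioi_cpow_mul_cexp_neg_mul (s := s - 1) hz le_rfl (.inl (by simpa using hs))
  have hint' {z : ℂ} (hz : 0 < z.re) :=
    integrableOn_Ioi_cpow_mul_cexp_neg_mul (s := s) hz le_rfl (.inl (by linarith))
  rw [← integral_neg]
  refine (hasDerivAt_integral_of_dominated_loc_of_deriv_le hU
    (F := fun z (x : ℝ) ↦ (x : ℂ) ^ (s - 1) * Complex.exp (-(z * x))) ?_ (hint hr)
    (F' := fun z x ↦ -((x : ℂ) ^ s * Complex.exp (-(z * x))))
    (hint' hr).neg.aestronglyMeasurable ?_ (hint' (z := δ) (by simpa using hδ)).norm ?_).2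
  · filter_upwards [hU] with z hz using (hint (hδ.trans hz)).aestronglyMeasurable
  · filter_upwards [ae_restrict_mem measurableSet_Ioi] with x (hx : 0 < x) z (hz : δ < z.re)
    rw [norm_neg, norm_mul, norm_mul, norm_cexp_neg_mul_ofReal, norm_cexp_neg_mul_ofReal,
      Complex.ofReal_re]
    gcongr
  · filter_upwards [ae_restrict_mem measurableSet_Ioi] with x (hx : 0 < x) z _
    have hexp : HasDerivAt (fun z : ℂ ↦ Complex.exp (-(z * x)))
        (Complex.exp (-(z * x)) * -x) z := by
      simpa using (((hasDerivAt_id z).mul_const (x : ℂ)).neg).cexp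
    convert! hexp.const_mul ((x : ℂ) ^ (s - 1)) using 1
    rw [Complex.cpow_sub _ _ (Complex.ofReal_ne_zero.mpr hx.ne'), Complex.cpow_one]
    field_simp [hx.ne']

theorem integral_Ioi_cpow_mul_cexp_neg_mul (hr : 0 < r.re) (hs : 0 < s.re) :
    ∫ x in Ioi (0 : ℝ), (x : ℂ) ^ (s - 1) * Complex.exp (-(r * x)) =
      r ^ (-s) * Complex.Gamma s := by
  have hs0 : s ≠ 0 := by rintro rfl; simp at hs
  set L : ℂ → ℂ := fun z ↦ ∫ x in Ioi (0 : ℝ), (x : ℂ) ^ (s - 1) * Complex.exp (-(z * x))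
  have hderiv : ∀ z : ℂ, 0 < z.re → HasDerivAt (fun z ↦ z ^ s * L z) 0 z := by
    intro z hz
    have hz0 : z ≠ 0 := by rintro rfl; simp at hz
    have hibp := mul_integral_Ioi_cpow_mul_cexp_neg_mul hz le_rfl (.inl hs)
    rw [Complex.ofReal_zero, Complex.zero_cpow hs0, zero_mul, zero_add] at hibp
    convert! ((hasDerivAt_id z).cpow_const (c := s) (.inl hz)).mul
      (hasDerivAt_integral_Ioi_cpow_mul_cexp_neg_mul hz hs) using 1
    simp only [id, mul_one]
    rw [Complex.cpow_sub _ _ hz0, Complex.cpow_one]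
    field_simp
    linear_combination z ^ s * hibp
  have hconst : r ^ s * L r = 1 ^ s * L 1 :=
    (isOpen_lt continuous_const Complex.continuous_re).is_const_of_deriv_eq_zero
      (convex_halfSpace_re_gt 0).isPreconnected
      (fun z hz ↦ (hderiv z hz).differentiableAt.differentiableWithinAt)
      (fun z hz ↦ (hderiv z hz).deriv) hr (by simp)
  have hL1 : L 1 = Complex.Gamma s := by
    simpa [L] using Complex.integral_cpow_mul_exp_neg_mul_Ioi hs one_pos
  have hr0 : r ≠ 0 := by rintro rfl; simp at hr
  have hrs : r ^ s ≠ 0 := (Complex.cpow_ne_zero_iff_of_exponent_ne_zero hs0).mpr hr0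
  rw [Complex.cpow_neg, ← hL1, eq_inv_mul_iff_mul_eq₀ hrs, hconst, Complex.one_cpow, one_mul]

lemma norm_integral_Ioi_cpow_mul_cexp_neg_mul_le (hr : 0 < r.re) (hT : 0 < T) (hs : s.re < 1) :
    ‖∫ x in Ioi T, (x : ℂ) ^ (s - 1) * Complex.exp (-(r * x))‖ ≤
      T ^ (s.re - 1) * (1 + ‖s - 1‖ / (1 - s.re)) / ‖r‖ := by
  have hboundary : ‖(T : ℂ) ^ (s - 1) * Complex.exp (-(r * T))‖ ≤ T ^ (s.re - 1) := by
    rw [norm_mul, Complex.norm_cpow_eq_rpow_re_of_pos hT]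
    exact mul_le_of_le_one_right (by positivity) (norm_cexp_neg_mul_ofReal_le_one hr.le hT.le)
  have htail : ‖∫ x in Ioi T, (x : ℂ) ^ (s - 1 - 1) * Complex.exp (-(r * x))‖ ≤
      T ^ (s.re - 1) / (1 - s.re) := by
    have hexponent : s.re - 1 - 1 < -1 := by linarith
    calc
      _ ≤ ∫ x in Ioi T, x ^ (s.re - 1 - 1) := by
        refine norm_integral_le_of_norm_le (integrableOn_Ioi_rpow_of_lt hexponent hT) ?_
        filter_upwards [ae_restrict_mem measurableSet_Ioi] with x (hx : T < x)
        have hx0 : 0 < x := hT.trans hx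
        rw [norm_mul, Complex.norm_cpow_eq_rpow_re_of_pos hx0]
        exact mul_le_of_le_one_right (by positivity) (norm_cexp_neg_mul_ofReal_le_one hr.le hx0.le)
      _ = T ^ (s.re - 1) / (1 - s.re) := by
        rw [integral_Ioi_rpow_of_lt hexponent hT, sub_add_cancel, ← neg_sub 1 s.re, neg_div_neg_eq]
  have hr0 : 0 < ‖r‖ := hr.trans_le (Complex.re_le_norm r)
  rw [le_div_iff₀' hr0, ← norm_mul,
    mul_integral_Ioi_cpow_mul_cexp_neg_mul hr hT.le (.inr hT.ne')]
  calc
    _ ≤ T ^ (s.re - 1) + ‖s - 1‖ * (T ^ (s.re - 1) / (1 - s.re)) := by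
      refine (norm_add_le _ _).trans ?_
      rw [norm_mul (s - 1)]
      gcongr
    _ = T ^ (s.re - 1) * (1 + ‖s - 1‖ / (1 - s.re)) := by ring

lemma continuousWithinAt_intervalIntegral_cpow_mul_cexp_neg_mul (r : ℂ) (hs : 0 < s.re)
    (hT : 0 ≤ T) :
    ContinuousWithinAt
      (fun r : ℂ ↦ ∫ x in (0 : ℝ)..T, (x : ℂ) ^ (s - 1) * Complex.exp (-(r * x)))
      {z | 0 < z.re} r := by
  refine intervalIntegral.continuousWithinAt_of_dominated_interval
    (bound := fun x ↦ x ^ (s.re - 1)) ?_ ?_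
    (intervalIntegral.intervalIntegrable_rpow' (by linarith)) ?_
  · filter_upwards [self_mem_nhdsWithin] with z (hz : 0 < z.re)
    rw [uIoc_of_le hT]
    exact ((integrableOn_Ioi_cpow_mul_cexp_neg_mul hz le_rfl
      (.inl (by simpa using hs))).mono_set Ioc_subset_Ioi_self).aestronglyMeasurable
  · filter_upwards [self_mem_nhdsWithin] with z (hz : 0 < z.re)
    refine ae_of_all _ fun x hx ↦ ?_
    rw [uIoc_of_le hT] at hx
    rw [norm_mul, Complex.norm_cpow_eq_rpow_re_of_pos hx.1]
    exact mul_le_of_le_one_right (Real.rpow_nonneg hx.1.le _)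
      (norm_cexp_neg_mul_ofReal_le_one hz.le hx.1.le)
  · exact ae_of_all _ fun x _ ↦ by fun_prop

lemma mem_slitPlane_of_re_nonneg_of_ne_zero (hr : 0 ≤ r.re) (hr0 : r ≠ 0) :
    r ∈ Complex.slitPlane :=
  Complex.mem_slitPlane_iff_not_le_zero.mpr fun hle ↦
    hr0 (Complex.ext (hle.1.antisymm hr) hle.2)

theorem norm_cpow_neg_mul_Gamma_sub_intervalIntegral_le (hr : 0 ≤ r.re) (hr0 : r ≠ 0)
    (hs : 0 < s.re) (hs1 : s.re < 1) (hT : 0 < T) :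
    ‖r ^ (-s) * Complex.Gamma s -
        ∫ x in (0 : ℝ)..T, (x : ℂ) ^ (s - 1) * Complex.exp (-(r * x))‖ ≤
      T ^ (s.re - 1) * (1 + ‖s - 1‖ / (1 - s.re)) / ‖r‖ := by
  have hslit := mem_slitPlane_of_re_nonneg_of_ne_zero hr hr0
  have hclosure : r ∈ closure {z : ℂ | 0 < z.re} := by
    simpa only [Complex.closure_setOfPred_lt_re] using! hr
  have hcontGamma : ContinuousAt (fun z : ℂ ↦ z ^ (-s) * Complex.Gamma s) r :=
    (continuousAt_cpow_const hslit).mul_const _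
  have hcontBound : ContinuousAt
      (fun z : ℂ ↦ T ^ (s.re - 1) * (1 + ‖s - 1‖ / (1 - s.re)) / ‖z‖) r :=
    continuousAt_const.div continuous_norm.continuousAt (norm_ne_zero_iff.mpr hr0)
  refine ContinuousWithinAt.closure_le hclosure
    (hcontGamma.continuousWithinAt.sub
      (continuousWithinAt_intervalIntegral_cpow_mul_cexp_neg_mul r hs hT.le)).norm
    hcontBound.continuousWithinAt fun z (hz : 0 < z.re) ↦ ?_
  have hint := integrableOn_Ioi_cpow_mul_cexp_neg_mul (s := s - 1) hz le_rfl
    (.inl (by simpa using hs))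
  rw [Pi.sub_apply, ← integral_Ioi_cpow_mul_cexp_neg_mul hz hs,
    ← intervalIntegral.integral_interval_add_Ioi hint (hint.mono_set (Ioi_subset_Ioi hT.le)),
    add_sub_cancel_left]
  exact norm_integral_Ioi_cpow_mul_cexp_neg_mul_le hz hT hs1

lemma tendsto_rpow_re_sub_one_atTop_prod_nhds (hs : s.re < 1) :
    Tendsto (fun p : ℝ × ℂ ↦ p.1 ^ (p.2.re - 1)) (atTop ×ˢ 𝓝 s) (𝓝 0) := by
  have hre : Tendsto (fun p : ℝ × ℂ ↦ p.2.re - 1) (atTop ×ˢ 𝓝 s) (𝓝 (s.re - 1)) :=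
    ((Complex.continuous_re.tendsto s).comp tendsto_snd).sub_const 1
  have hlog : Tendsto (fun p : ℝ × ℂ ↦ Real.log p.1) (atTop ×ˢ 𝓝 s) atTop :=
    Real.tendsto_log_atTop.comp tendsto_fst
  refine (Real.tendsto_exp_atBot.comp (hlog.atTop_mul_neg (by linarith) hre)).congr' ?_
  filter_upwards [tendsto_fst.eventually (eventually_gt_atTop 0)] with p hp
  exact (Real.rpow_def_of_pos hp _).symm

theorem tendstoLocallyUniformlyOn_intervalIntegral_cpow_mul_cexp_neg_mul (hr : 0 ≤ r.re)
    (hr0 : r ≠ 0) :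
    TendstoLocallyUniformlyOn
      (fun (T : ℝ) (s : ℂ) ↦ ∫ x in (0 : ℝ)..T, (x : ℂ) ^ (s - 1) * Complex.exp (-(r * x)))
      (fun s ↦ r ^ (-s) * Complex.Gamma s) atTop (Complex.re ⁻¹' Ioo 0 1) := by
  refine tendstoLocallyUniformlyOn_iff_filter.mpr fun s hs ↦
    Metric.tendstoUniformlyOnFilter_iff.mpr fun ε hε ↦ ?_
  have hfactor : ContinuousAt (fun s : ℂ ↦ 1 + ‖s - 1‖ / (1 - s.re)) s :=
    continuousAt_const.add (ContinuousAt.div (by fun_prop) (by fun_prop) (by linarith [hs.2]))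
  have hbound : Tendsto
      (fun p : ℝ × ℂ ↦ p.1 ^ (p.2.re - 1) * (1 + ‖p.2 - 1‖ / (1 - p.2.re)) / ‖r‖)
      (atTop ×ˢ 𝓝 s) (𝓝 0) := by
    simpa using ((tendsto_rpow_re_sub_one_atTop_prod_nhds hs.2).mul
      (hfactor.tendsto.comp tendsto_snd)).div_const ‖r‖
  have hle : (atTop : Filter ℝ) ×ˢ 𝓝[Complex.re ⁻¹' Ioo 0 1] s ≤ atTop ×ˢ 𝓝 s :=
    prod_mono le_rfl nhdsWithin_le_nhds
  filter_upwards [(hbound.mono_left hle).eventually (gt_mem_nhds hε),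
    tendsto_fst.eventually (eventually_gt_atTop (0 : ℝ)),
    tendsto_snd.eventually self_mem_nhdsWithin] with p hp hT hstrip
  rw [dist_eq_norm]
  exact (norm_cpow_neg_mul_Gamma_sub_intervalIntegral_le hr hr0 hstrip.1 hstrip.2
    hT).trans_lt hp

end LaplaceCpow

section TruncatedMellin

variable {E : Type*} [NormedAddCommGroup E] [NormedSpace ℂ E] {T : ℝ}

lemma mellin_indicator_Ioc_zero (hT : 0 ≤ T) (f : ℝ → E) (s : ℂ) :
    mellin ((Ioc 0 T).indicator f) s = ∫ x in (0 : ℝ)..T, (x : ℂ) ^ (s - 1) • f x := by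
  simp_rw [mellin, intervalIntegral.integral_of_le hT, ← indicator_smul]
  rw [setIntegral_indicator measurableSet_Ioc, inter_eq_right.mpr Ioc_subset_Ioi_self]

lemma mellinConvergent_indicator_Ioc_zero_iff (hT : 0 ≤ T) (f : ℝ → E) (s : ℂ) :
    MellinConvergent ((Ioc 0 T).indicator f) s ↔
      IntervalIntegrable (fun x : ℝ ↦ (x : ℂ) ^ (s - 1) • f x) volume 0 T := by
  simp_rw [MellinConvergent, intervalIntegrable_iff_integrableOn_Ioc_of_le hT, ← indicator_smul]
  rw [integrableOn_indicator_iff measurableSet_Ioc, inter_eq_left.mpr Ioc_subset_Ioi_self]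

lemma hasDerivAt_intervalIntegral_cpow_smul (hT : 0 ≤ T) {f : ℝ → E} (hf : ContinuousOn f (Icc 0 T))
    {s : ℂ} (hs : 0 < s.re) :
    IntervalIntegrable (fun x : ℝ ↦ (x : ℂ) ^ (s - 1) • Real.log x • f x) volume 0 T ∧
      HasDerivAt (fun s : ℂ ↦ ∫ x in (0 : ℝ)..T, (x : ℂ) ^ (s - 1) • f x)
        (∫ x in (0 : ℝ)..T, (x : ℂ) ^ (s - 1) • Real.log x • f x) s := by
  set g : ℝ → E := (Ioc 0 T).indicator f
  obtain ⟨C, hC⟩ := isCompact_Icc.exists_bound_of_continuousOn hf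
  have hloc : LocallyIntegrableOn g (Ioi 0) :=
    ((integrable_indicator_iff measurableSet_Ioc).mpr
      (hf.integrableOn_Icc.mono_set Ioc_subset_Icc_self)).locallyIntegrable.locallyIntegrableOn _
  have htop : g =O[atTop] (· ^ (-(s.re + 1)) : ℝ → ℝ) := by
    refine EventuallyEq.trans_isBigO (f₂ := fun _ ↦ 0) ?_ (Asymptotics.isBigO_zero _ _)
    filter_upwards [eventually_gt_atTop T] with x hx
    exact indicator_of_notMem (fun h ↦ hx.not_ge h.2) f
  have hzero : g =O[𝓝[>] 0] (· ^ (-0 : ℝ) : ℝ → ℝ) := by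
    refine .of_bound C (.of_forall fun x ↦ ?_)
    have hC0 : 0 ≤ C := (norm_nonneg _).trans (hC 0 (left_mem_Icc.mpr hT))
    rw [neg_zero, Real.rpow_zero, norm_one, mul_one, norm_indicator_eq_indicator_norm]
    exact indicator_apply_le' (fun hx ↦ hC x (Ioc_subset_Icc_self hx)) fun _ ↦ hC0
  have h := mellin_hasDerivAt_of_isBigO_rpow hloc htop (by linarith) hzero hs
  have hlog : (fun x ↦ Real.log x • g x) = (Ioc 0 T).indicator fun x ↦ Real.log x • f x :=
    (indicator_smul (Ioc 0 T) Real.log f).symm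
  rw [hlog, mellinConvergent_indicator_Ioc_zero_iff hT, mellin_indicator_Ioc_zero hT] at h
  refine ⟨h.1, ?_⟩
  simpa only [g, funext (mellin_indicator_Ioc_zero hT f)] using h.2

end TruncatedMellin

theorem tendsto_intervalIntegral_cpow_smul_log_smul_cexp_neg_mul {r s : ℂ} (hr : 0 ≤ r.re)
    (hr0 : r ≠ 0) (hs0 : 0 < s.re) (hs1 : s.re < 1) :
    Tendsto
      (fun T : ℝ ↦ ∫ x in (0 : ℝ)..T,
        (x : ℂ) ^ (s - 1) • Real.log x • Complex.exp (-(r * x)))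
      atTop (𝓝 (r ^ (-s) * (deriv Complex.Gamma s - Complex.log r * Complex.Gamma s))) := by
  have hcexp (T : ℝ) : ContinuousOn (fun x : ℝ ↦ Complex.exp (-(r * x))) (Icc 0 T) := by fun_prop
  have hstrip : IsOpen (Complex.re ⁻¹' Ioo 0 1) := isOpen_Ioo.preimage Complex.continuous_re
  have hdiff : ∀ᶠ T : ℝ in atTop, DifferentiableOn ℂ
      (fun s : ℂ ↦ ∫ x in (0 : ℝ)..T, (x : ℂ) ^ (s - 1) * Complex.exp (-(r * x)))
      (Complex.re ⁻¹' Ioo 0 1) := by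
    filter_upwards [eventually_ge_atTop 0] with T hT z hz
    exact (hasDerivAt_intervalIntegral_cpow_smul hT (hcexp T)
      hz.1).2.differentiableAt.differentiableWithinAt
  have hlim := ((tendstoLocallyUniformlyOn_intervalIntegral_cpow_mul_cexp_neg_mul hr hr0).deriv
    hdiff hstrip).tendsto_at ⟨hs0, hs1⟩
  have hpole (m : ℕ) : s ≠ -m := by
    rintro rfl
    exact hs0.not_ge (by simp)
  have hGamma := (Complex.differentiableAt_Gamma s hpole).hasDerivAt
  have hlimit : HasDerivAt (fun s ↦ r ^ (-s) * Complex.Gamma s)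
      (r ^ (-s) * (deriv Complex.Gamma s - Complex.log r * Complex.Gamma s)) s := by
    convert! ((hasDerivAt_neg s).const_cpow (.inl hr0)).mul hGamma using 1
    ring
  rw [hlimit.deriv] at hlim
  refine hlim.congr' ?_
  filter_upwards [eventually_ge_atTop 0] with T hT
  exact (hasDerivAt_intervalIntegral_cpow_smul hT (hcexp T) hs0).2.deriv

lemma deriv_complexGamma_ofReal {x : ℝ} (hx : ∀ m : ℕ, x ≠ -m) :
    deriv Complex.Gamma x = (deriv Real.Gamma x : ℝ) := by
  have hcomplex : HasDerivAt (fun y : ℝ ↦ Complex.Gamma y) (deriv Complex.Gamma x) x :=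
    (Complex.differentiableAt_Gamma x fun m ↦ mod_cast hx m).hasDerivAt.comp_ofReal
  have hreal : HasDerivAt (fun y : ℝ ↦ Complex.Gamma y) (deriv Real.Gamma x : ℝ) x := by
    simpa only [Complex.Gamma_ofReal] using!
      (Real.differentiableAt_Gamma hx).hasDerivAt.ofReal_comp
  exact hcomplex.unique hreal

lemma log_ofReal_mul_I {a : ℝ} (ha : 0 < a) :
    Complex.log (a * Complex.I) = Real.log a + (Real.pi / 2 : ℝ) * Complex.I := by
  rw [Complex.log_ofReal_mul ha Complex.I_ne_zero, Complex.log_I, Complex.ofReal_div,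
    Complex.ofReal_ofNat]

lemma ofReal_mul_I_cpow_ofReal {a : ℝ} (ha : 0 < a) (ν : ℝ) :
    (a * Complex.I : ℂ) ^ (ν : ℂ) =
      (a ^ ν : ℝ) * (Real.cos (ν * Real.pi / 2) + Real.sin (ν * Real.pi / 2) * Complex.I) := by
  rw [Complex.cpow_def_of_ne_zero (mul_ne_zero (mod_cast ha.ne') Complex.I_ne_zero),
    log_ofReal_mul_I ha, Real.rpow_def_of_pos ha, Complex.ofReal_exp, Complex.ofReal_cos,
    Complex.ofReal_sin, ← Complex.exp_mul_I, ← Complex.exp_add]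
  push_cast
  ring_nf

lemma re_ofReal_mul_I_cpow_neg_mul_sub_log_mul {a : ℝ} (ha : 0 < a) (μ c d : ℝ) :
    ((a * Complex.I : ℂ) ^ (-(μ : ℂ)) * (c - Complex.log (a * Complex.I) * d)).re =
      (1 / a ^ μ) * ((c - Real.log a * d) * Real.cos (μ * Real.pi / 2) -
        (Real.pi / 2) * d * Real.sin (μ * Real.pi / 2)) := by
  rw [← Complex.ofReal_neg, ofReal_mul_I_cpow_ofReal ha, log_ofReal_mul_I ha, neg_mul, neg_div,
    Real.cos_neg, Real.sin_neg, Real.rpow_neg ha.le]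
  simp only [Complex.mul_re, Complex.mul_im, Complex.add_re, Complex.add_im, Complex.sub_re,
    Complex.sub_im, Complex.ofReal_re, Complex.ofReal_im, Complex.I_re, Complex.I_im]
  ring

lemma re_cpow_smul_log_smul_cexp_neg_mul_I (a μ : ℝ) {x : ℝ} (hx : 0 ≤ x) :
    ((x : ℂ) ^ ((μ : ℂ) - 1) • Real.log x • Complex.exp (-(a * Complex.I * x))).re =
      Real.cos (a * x) * x ^ (μ - 1) * Real.log x := by
  have hpow : (x : ℂ) ^ ((μ : ℂ) - 1) = (x ^ (μ - 1) : ℝ) := by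
    rw [Complex.ofReal_cpow hx, Complex.ofReal_sub, Complex.ofReal_one]
  have hexp : (Complex.exp (-(a * Complex.I * x))).re = Real.cos (a * x) := by
    simp [Complex.exp_re]
  rw [hpow, smul_eq_mul, Complex.re_ofReal_mul, Complex.smul_re, smul_eq_mul, hexp]
  ring

/-- For real `a > 0` and `0 < μ < 1`, the improper integral
`∫₀^∞ cos(ax) x^{μ-1} ln x dx` exists as `lim_{T→∞} ∫₀^T` and equals
`(Γ(μ)/a^μ) [ (ψ(μ) - ln a) cos(μπ/2) - (π/2) sin(μπ/2) ]`,
where `ψ(μ) = Γ'(μ)/Γ(μ)`. -/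
theorem cos_rpow_log_integral (a : ℝ) (ha : 0 < a) (μ : ℝ) (hμ0 : 0 < μ) (hμ1 : μ < 1) :
    Tendsto
      (fun T : ℝ => ∫ x in (0 : ℝ)..T, Real.cos (a * x) * x ^ (μ - 1) * Real.log x)
      atTop
      (nhds ((Real.Gamma μ / a ^ μ) *
        ((deriv Real.Gamma μ / Real.Gamma μ - Real.log a) * Real.cos (μ * Real.pi / 2) -
          (Real.pi / 2) * Real.sin (μ * Real.pi / 2)))) := by
  have hGamma : Real.Gamma μ ≠ 0 := (Real.Gamma_pos_of_pos hμ0).ne'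
  have hlim := tendsto_intervalIntegral_cpow_smul_log_smul_cexp_neg_mul (r := a * Complex.I)
    (s := μ) (by simp) (by simp [ha.ne']) hμ0 hμ1
  rw [deriv_complexGamma_ofReal fun m ↦ by have := m.cast_nonneg (α := ℝ); linarith,
    Complex.Gamma_ofReal] at hlim
  convert! ((Complex.continuous_re.tendsto _).comp hlim).congr' ?_ using 2
  · rw [re_ofReal_mul_I_cpow_neg_mul_sub_log_mul ha]
    field_simp
  filter_upwards [eventually_ge_atTop 0] with T hT
  have hint := (hasDerivAt_intervalIntegral_cpow_smul (s := μ) hT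
    (f := fun x ↦ Complex.exp (-(a * Complex.I * x))) (by fun_prop) hμ0).1
  refine (Complex.reCLM.intervalIntegral_comp_comm hint).symm.trans
    (intervalIntegral.integral_congr fun x hx ↦ ?_)
  rw [uIcc_of_le hT] at hx
  exact re_cpow_smul_log_smul_cexp_neg_mul_I a μ hx.1
end

section
/- For every real a > 0, the function μ ↦ (lim_{T→∞} ∫₀^T cos(a·x) · x^{μ−1} · ln x dx) + 1/μ², defined for 0 < μ < 1, tends to −π²/24 + γ·(γ/2 + ln a) + (ln a)²/2 as μ → 0⁺, where γ is the Euler–Mascheroni constant. -/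
open MeasureTheory Filter

open Set
open scoped Topology

/-!
By Abel's theorem for integrals, the improper integral `F μ` is the limit as `ε → 0⁺` of the same
integral damped by `exp (-ε x)`. The damped integrand is the real part of
`x ^ (μ - 1) * log x * exp (-r x)` with `r = ε - a i`, and its integral is the derivative in `s` of
`∫ x ^ (s - 1) * exp (-r x) dx = r ^ (-s) Γ(s)` at `s = μ`. Letting `r → -a i` gives
`F = d/ds (Γ(s) cos(π s / 2) a ^ (-s)) = d/ds (H(s) / s)` with
`H(s) = Γ(1 + s) cos(π s / 2) a ^ (-s)`. Since `H(0) = 1`, the term `1 / μ²` cancels the double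
pole of `F` at `0` and `F μ + 1 / μ² → H''(0) / 2`. The only value in `H''(0)` that is not
elementary, `Γ''(1) = γ² + π² / 6`, comes from differentiating
`Γ(1 + x) Γ(1 - x) sin(π x) = π x` three times at `0`.
-/

lemma exists_norm_le_of_continuousOn_Ici_of_tendsto {E : Type*} [SeminormedAddCommGroup E]
    {f : ℝ → E} {a : ℝ} {L : E} (hf : ContinuousOn f (Ici a)) (hL : Tendsto f atTop (𝓝 L)) :
    ∃ C, ∀ x ∈ Ici a, ‖f x‖ ≤ C := by
  obtain ⟨T, hT⟩ := eventually_atTop.1 (hL.norm.eventually_le_const (lt_add_one ‖L‖))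
  obtain ⟨C, hC⟩ := (isCompact_Icc (a := a) (b := T)).exists_bound_of_continuousOn
    (hf.mono Icc_subset_Ici_self)
  refine ⟨max C (‖L‖ + 1), fun x hx => ?_⟩
  rcases le_total x T with hxT | hTx
  · exact (hC x ⟨hx, hxT⟩).trans (le_max_left _ _)
  · exact (hT x hTx).trans (le_max_right _ _)

section AbelMean

variable {E : Type*} [NormedAddCommGroup E] [NormedSpace ℝ E]

lemma tendsto_smul_integral_Ioi_exp_neg_mul_smul [CompleteSpace E] {Φ : ℝ → E} {L : E} {C : ℝ}
    (hmeas : AEStronglyMeasurable Φ (volume.restrict (Ioi 0))) (hC : ∀ t, 0 < t → ‖Φ t‖ ≤ C)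
    (hL : Tendsto Φ atTop (𝓝 L)) :
    Tendsto (fun ε : ℝ => ε • ∫ t in Ioi 0, Real.exp (-(ε * t)) • Φ t) (𝓝[>] 0) (𝓝 L) := by
  have hscale : ∀ ε : ℝ, 0 < ε → ∫ u in Ioi 0, Real.exp (-u) • Φ (ε⁻¹ * u) =
      ε • ∫ t in Ioi 0, Real.exp (-(ε * t)) • Φ t := by
    intro ε hε
    have h := integral_comp_mul_left_Ioi (fun u => Real.exp (-u) • Φ (ε⁻¹ * u)) 0 hε
    simp only [mul_zero, inv_mul_cancel_left₀ hε.ne'] at h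
    rw [h, smul_inv_smul₀ hε.ne']
  have hlim : Tendsto (fun ε : ℝ => ∫ u in Ioi 0, Real.exp (-u) • Φ (ε⁻¹ * u)) (𝓝[>] 0)
      (𝓝 (∫ u in Ioi 0, Real.exp (-u) • L)) := by
    refine tendsto_integral_filter_of_dominated_convergence (fun u => Real.exp (-u) * C) ?_ ?_
      ((integrableOn_exp_neg_Ioi 0).mul_const C) ?_
    · filter_upwards [self_mem_nhdsWithin] with ε (hε : 0 < ε)
      have hdilate : Measure.QuasiMeasurePreserving (fun u : ℝ => ε⁻¹ * u)
          (volume.restrict (Ioi 0)) (volume.restrict (Ioi 0)) :=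
        (Measure.quasiMeasurePreserving_smul volume (inv_ne_zero hε.ne')).restrict
          fun _ hu => mul_pos (inv_pos.2 hε) hu
      exact (by fun_prop : Continuous fun u : ℝ => Real.exp (-u)).aestronglyMeasurable.smul
        (hmeas.comp_quasiMeasurePreserving hdilate)
    · filter_upwards [self_mem_nhdsWithin] with ε (hε : 0 < ε)
      filter_upwards [ae_restrict_mem measurableSet_Ioi] with u (hu : 0 < u)
      rw [norm_smul, Real.norm_eq_abs, Real.abs_exp]
      gcongr
      exact hC _ (by positivity)
    · filter_upwards [ae_restrict_mem measurableSet_Ioi] with u hu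
      exact (hL.comp (tendsto_inv_nhdsGT_zero.atTop_mul_const hu)).const_smul _
  rw [integral_smul_const, integral_exp_neg_Ioi_zero, one_smul] at hlim
  refine hlim.congr' ?_
  filter_upwards [self_mem_nhdsWithin] with ε hε using hscale ε hε

lemma integral_Ioi_exp_neg_mul {ε : ℝ} (hε : 0 < ε) (x : ℝ) :
    ∫ t in Ioi x, Real.exp (-(ε * t)) = ε⁻¹ * Real.exp (-(ε * x)) := by
  have := integral_exp_mul_Ioi (neg_lt_zero.2 hε) x
  simp only [neg_mul, neg_div_neg_eq] at this
  rw [this, div_eq_inv_mul]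

lemma integrableOn_Ioi_exp_neg_mul {ε : ℝ} (hε : 0 < ε) (x : ℝ) :
    IntegrableOn (fun t => Real.exp (-(ε * t))) (Ioi x) := by
  simpa using exp_neg_integrableOn_Ioi x hε

lemma integrableOn_Ioc_of_integrableOn_exp_neg_mul_smul {f : ℝ → E} {ε : ℝ}
    (hf : IntegrableOn (fun x => Real.exp (-(ε * x)) • f x) (Ioi 0)) (T : ℝ) :
    IntegrableOn f (Ioc 0 T) := by
  have h : IntegrableOn (fun x => Real.exp (-(ε * x)) • f x) (Icc 0 T) :=
    (integrableOn_Icc_iff_integrableOn_Ioc).2 (hf.mono_set Ioc_subset_Ioi_self)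
  refine ((h.continuousOn_smul (f := fun x => Real.exp (ε * x)) (by fun_prop)
    isCompact_Icc).mono_set Ioc_subset_Icc_self).congr_fun (fun x _ => ?_) measurableSet_Ioc
  simp [smul_smul, ← Real.exp_add]

lemma integral_Ioi_indicator_exp_neg_mul_smul [CompleteSpace E] {ε x : ℝ} (hε : 0 < ε)
    (hx : 0 ≤ x) (v : E) :
    ∫ t in Ioi 0, (Ioi x).indicator (fun t => Real.exp (-(ε * t)) • v) t =
      ε⁻¹ • Real.exp (-(ε * x)) • v := by
  rw [setIntegral_indicator measurableSet_Ioi, Ioi_inter_Ioi, sup_eq_right.2 hx,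
    integral_smul_const, integral_Ioi_exp_neg_mul hε, mul_smul]

lemma integrable_indicator_Ioi_exp_neg_mul_smul {f : ℝ → E} {ε : ℝ} (hε : 0 < ε)
    (hf : IntegrableOn (fun x => Real.exp (-(ε * x)) • f x) (Ioi 0)) :
    Integrable (fun p : ℝ × ℝ => (Ioi p.1).indicator (fun t => Real.exp (-(ε * t)) • f p.1) p.2)
      ((volume.restrict (Ioi 0)).prod (volume.restrict (Ioi 0))) := by
  have hf_meas : AEStronglyMeasurable f (volume.restrict (Ioi 0)) := by
    refine ((by fun_prop : Continuous fun x : ℝ => Real.exp (ε * x)).aestronglyMeasurable.smul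
      hf.aestronglyMeasurable).congr (Eventually.of_forall fun x => ?_)
    simp [smul_smul, ← Real.exp_add]
  have hmeas : AEStronglyMeasurable
      ({p : ℝ × ℝ | p.1 < p.2}.indicator fun p => Real.exp (-(ε * p.2)) • f p.1)
      ((volume.restrict (Ioi 0)).prod (volume.restrict (Ioi 0))) :=
    ((by fun_prop : Continuous fun p : ℝ × ℝ =>
      Real.exp (-(ε * p.2))).aestronglyMeasurable.smul hf_meas.comp_fst).indicator
      (measurableSet_lt measurable_fst measurable_snd)
  refine (integrable_prod_iff hmeas).2 ⟨Eventually.of_forall fun x => ?_, ?_⟩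
  · exact ((integrableOn_Ioi_exp_neg_mul hε 0).smul_const (f x)).indicator measurableSet_Ioi
  · refine (hf.norm.const_mul ε⁻¹).congr ?_
    filter_upwards [ae_restrict_mem measurableSet_Ioi] with x (hx : 0 < x)
    have h := integral_Ioi_indicator_exp_neg_mul_smul hε hx.le ‖f x‖
    simp only [smul_eq_mul] at h
    rw [norm_smul, Real.norm_eq_abs, Real.abs_exp, ← h]
    congr 1 with t
    simp [indicator_apply, apply_ite norm, norm_smul]

lemma integral_Ioi_exp_neg_mul_smul [CompleteSpace E] {f : ℝ → E} {ε : ℝ} (hε : 0 < ε)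
    (hf : IntegrableOn (fun x => Real.exp (-(ε * x)) • f x) (Ioi 0)) :
    ∫ x in Ioi 0, Real.exp (-(ε * x)) • f x =
      ε • ∫ t in Ioi 0, Real.exp (-(ε * t)) • ∫ x in (0 : ℝ)..t, f x := by
  have hinner : ∀ t ∈ Ioi (0 : ℝ),
      ∫ x in Ioi 0, (Ioi x).indicator (fun t => Real.exp (-(ε * t)) • f x) t =
        Real.exp (-(ε * t)) • ∫ x in (0 : ℝ)..t, f x := by
    intro t (ht : 0 < t)
    have hswap : (fun x => (Ioi x).indicator (fun t => Real.exp (-(ε * t)) • f x) t) =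
        (Iio t).indicator fun x => Real.exp (-(ε * t)) • f x := rfl
    rw [hswap, setIntegral_indicator measurableSet_Iio, Ioi_inter_Iio, integral_smul,
      intervalIntegral.integral_of_le ht.le, integral_Ioc_eq_integral_Ioo]
  calc ∫ x in Ioi 0, Real.exp (-(ε * x)) • f x
      = ∫ x in Ioi 0, ε • ∫ t in Ioi 0, (Ioi x).indicator (fun t => Real.exp (-(ε * t)) • f x) t :=
        setIntegral_congr_fun measurableSet_Ioi fun x hx => by
          rw [integral_Ioi_indicator_exp_neg_mul_smul hε (le_of_lt hx), smul_inv_smul₀ hε.ne']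
    _ = ε • ∫ t in Ioi 0, ∫ x in Ioi 0,
          (Ioi x).indicator (fun t => Real.exp (-(ε * t)) • f x) t := by
        rw [integral_smul, integral_integral_swap (integrable_indicator_Ioi_exp_neg_mul_smul hε hf)]
    _ = ε • ∫ t in Ioi 0, Real.exp (-(ε * t)) • ∫ x in (0 : ℝ)..t, f x := by
        rw [setIntegral_congr_fun measurableSet_Ioi hinner]

lemma tendsto_integral_Ioi_exp_neg_mul_smul_of_tendsto [CompleteSpace E] {f : ℝ → E} {L : E}
    (hf : ∀ ε : ℝ, 0 < ε → IntegrableOn (fun x => Real.exp (-(ε * x)) • f x) (Ioi 0))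
    (hL : Tendsto (fun T : ℝ => ∫ x in (0 : ℝ)..T, f x) atTop (𝓝 L)) :
    Tendsto (fun ε : ℝ => ∫ x in Ioi 0, Real.exp (-(ε * x)) • f x) (𝓝[>] 0) (𝓝 L) := by
  have hcont : ContinuousOn (fun T : ℝ => ∫ x in (0 : ℝ)..T, f x) (Ici 0) := by
    intro T (hT : 0 ≤ T)
    have hint : IntegrableOn f (uIcc 0 (T + 1)) := by
      rw [uIcc_of_le (by positivity), integrableOn_Icc_iff_integrableOn_Ioc]
      exact integrableOn_Ioc_of_integrableOn_exp_neg_mul_smul (hf 1 one_pos) _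
    have := intervalIntegral.continuousOn_primitive_interval hint
    rw [uIcc_of_le (by positivity), ← Ici_inter_Iic] at this
    exact (this T ⟨hT, (lt_add_one T).le⟩).mono_of_mem_nhdsWithin
      (inter_mem_nhdsWithin _ (Iic_mem_nhds (lt_add_one T)))
  obtain ⟨C, hC⟩ := exists_norm_le_of_continuousOn_Ici_of_tendsto hcont hL
  have hmeas :=
    (hcont.mono Ioi_subset_Ici_self).aestronglyMeasurable (μ := volume) measurableSet_Ioi
  refine (tendsto_smul_integral_Ioi_exp_neg_mul_smul hmeas (fun t ht => hC t ht.le) hL).congr' ?_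
  filter_upwards [self_mem_nhdsWithin] with ε hε
    using (integral_Ioi_exp_neg_mul_smul hε (hf ε hε)).symm

end AbelMean

section Leibniz

variable {𝕜 : Type*} [NontriviallyNormedField 𝕜] {f g : 𝕜 → 𝕜} {x : 𝕜}

lemma iteratedDeriv_two_fun_mul (hf : ContDiffAt 𝕜 2 f x) (hg : ContDiffAt 𝕜 2 g x) :
    iteratedDeriv 2 (fun y => f y * g y) x =
      f x * iteratedDeriv 2 g x + 2 * deriv f x * deriv g x + iteratedDeriv 2 f x * g x := by
  simp [iteratedDeriv_fun_mul hf hg, Finset.sum_range_succ]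

lemma iteratedDeriv_three_fun_mul (hf : ContDiffAt 𝕜 3 f x) (hg : ContDiffAt 𝕜 3 g x) :
    iteratedDeriv 3 (fun y => f y * g y) x =
      f x * iteratedDeriv 3 g x + 3 * deriv f x * iteratedDeriv 2 g x +
        3 * iteratedDeriv 2 f x * deriv g x + iteratedDeriv 3 f x * g x := by
  simp [iteratedDeriv_fun_mul hf hg, Finset.sum_range_succ]

end Leibniz

section Gamma

lemma ne_neg_natCast_of_re_pos {s : ℂ} (hs : 0 < s.re) (m : ℕ) : s ≠ -m := by
  rintro rfl
  simp only [Complex.neg_re, Complex.natCast_re, Left.neg_pos_iff] at hs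
  exact m.cast_nonneg.not_gt hs

lemma analyticAt_complexGamma {s : ℂ} (hs : ∀ m : ℕ, s ≠ -m) : AnalyticAt ℂ Complex.Gamma s := by
  have h := (Complex.differentiable_one_div_Gamma.analyticAt s).inv
    (inv_ne_zero (Complex.Gamma_ne_zero hs))
  exact h.congr (Eventually.of_forall fun z => inv_inv (Complex.Gamma z))

lemma analyticAt_realGamma {x : ℝ} (hx : ∀ m : ℕ, x ≠ -m) : AnalyticAt ℝ Real.Gamma x :=
  (analyticAt_complexGamma (s := x) fun m => by exact_mod_cast hx m).re_ofReal

lemma analyticAt_realGamma_of_pos {x : ℝ} (hx : 0 < x) : AnalyticAt ℝ Real.Gamma x :=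
  analyticAt_realGamma fun m => ((neg_nonpos.2 m.cast_nonneg).trans_lt hx).ne'

lemma Gamma_one_add_mul_Gamma_one_sub_mul_sin {x : ℝ} (hx : |x| < 1) :
    Real.Gamma (1 + x) * Real.Gamma (1 - x) * Real.sin (Real.pi * x) = Real.pi * x := by
  rcases eq_or_ne x 0 with rfl | hx0
  · simp
  have hsin : Real.sin (Real.pi * x) ≠ 0 := by
    rw [mul_comm, Ne, Real.sin_eq_zero_iff]
    rintro ⟨n, hn⟩
    obtain rfl : (n : ℝ) = x := mul_right_cancel₀ Real.pi_ne_zero hn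
    rw [← Int.cast_abs] at hx
    exact hx0 (by exact_mod_cast Int.abs_lt_one_iff.1 (by exact_mod_cast hx))
  rw [add_comm, Real.Gamma_add_one hx0, mul_assoc x, Real.Gamma_mul_Gamma_one_sub, mul_assoc,
    div_mul_cancel₀ _ hsin, mul_comm]

lemma iteratedDeriv_two_Gamma_one :
    iteratedDeriv 2 Real.Gamma 1 = Real.eulerMascheroniConstant ^ 2 + Real.pi ^ 2 / 6 := by
  have hadd : ContDiffAt ℝ 3 (fun x => Real.Gamma (1 + x)) 0 :=
    ((analyticAt_realGamma_of_pos (by simp)).comp (by fun_prop)).contDiffAt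
  have hsub : ContDiffAt ℝ 3 (fun x => Real.Gamma (1 - x)) 0 :=
    ((analyticAt_realGamma_of_pos (by simp)).comp (by fun_prop)).contDiffAt
  have hΓ' : deriv Real.Gamma 1 = -Real.eulerMascheroniConstant := Real.hasDerivAt_Gamma_one.deriv
  have hprod : iteratedDeriv 2 (fun x => Real.Gamma (1 + x) * Real.Gamma (1 - x)) 0 =
      2 * (iteratedDeriv 2 Real.Gamma 1 - Real.eulerMascheroniConstant ^ 2) := by
    rw [iteratedDeriv_two_fun_mul (hadd.of_le (by norm_num)) (hsub.of_le (by norm_num))]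
    simp only [iteratedDeriv_comp_const_add, iteratedDeriv_comp_const_sub, deriv_comp_const_add,
      deriv_comp_const_sub, add_zero, sub_zero, hΓ', Real.Gamma_one, smul_eq_mul]
    ring
  have hsin (n : ℕ) : iteratedDeriv n (fun x => Real.sin (Real.pi * x)) 0 =
      Real.pi ^ n * iteratedDeriv n Real.sin 0 := by
    simp [iteratedDeriv_comp_const_mul Real.contDiff_sin]
  have hsin₁ : deriv (fun x => Real.sin (Real.pi * x)) 0 = Real.pi := by
    simpa using hsin 1
  have hsin₂ : iteratedDeriv 2 (fun x => Real.sin (Real.pi * x)) 0 = 0 := by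
    simp [hsin, Real.iteratedDeriv_even_sin 1]
  have hsin₃ : iteratedDeriv 3 (fun x => Real.sin (Real.pi * x)) 0 = -Real.pi ^ 3 := by
    simp [hsin, Real.iteratedDeriv_odd_sin 1]
  have hlinear : (fun x => Real.Gamma (1 + x) * Real.Gamma (1 - x) * Real.sin (Real.pi * x))
      =ᶠ[𝓝 0] fun x => Real.pi * x := by
    filter_upwards [Ioo_mem_nhds neg_one_lt_zero one_pos] with x hx
    exact Gamma_one_add_mul_Gamma_one_sub_mul_sin (abs_lt.2 hx)
  have hthird := hlinear.iteratedDeriv_eq 3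
  rw [iteratedDeriv_three_fun_mul (hadd.mul hsub) (by fun_prop), hsin₁, hsin₂, hsin₃, hprod,
    iteratedDeriv_const_mul_field, iteratedDeriv_fun_id] at hthird
  simp only [OfNat.ofNat_ne_zero, OfNat.ofNat_ne_one, if_false, mul_zero, add_zero, sub_zero,
    Real.sin_zero, Real.Gamma_one, mul_one, one_mul] at hthird
  have hleibniz : Real.pi * (6 * (iteratedDeriv 2 Real.Gamma 1 -
      Real.eulerMascheroniConstant ^ 2) - Real.pi ^ 2) = 0 := by
    linear_combination hthird
  linarith [(mul_eq_zero.1 hleibniz).resolve_left Real.pi_ne_zero]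

end Gamma

section DSlope

variable {𝕜 : Type*} [NontriviallyNormedField 𝕜] [CompleteSpace 𝕜] [CharZero 𝕜]

lemma deriv_dslope_self {f : 𝕜 → 𝕜} {z : 𝕜} (hf : AnalyticAt 𝕜 f z) :
    deriv (dslope f z) z = iteratedDeriv 2 f z / 2 := by
  have := hf.hasFPowerSeriesAt.has_fpower_series_dslope_fslope.deriv
  simp [this, FormalMultilinearSeries.fslope]

lemma tendsto_deriv_div_add_div_sq {f : 𝕜 → 𝕜} (hf : AnalyticAt 𝕜 f 0) :
    Tendsto (fun x => deriv (fun y => f y / y) x + f 0 / x ^ 2) (𝓝[≠] 0)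
      (𝓝 (iteratedDeriv 2 f 0 / 2)) := by
  have hd : AnalyticAt 𝕜 (dslope f 0) 0 :=
    hf.hasFPowerSeriesAt.has_fpower_series_dslope_fslope.analyticAt
  rw [← deriv_dslope_self hf]
  refine (hd.deriv.continuousAt.tendsto.mono_left nhdsWithin_le_nhds).congr' ?_
  filter_upwards [self_mem_nhdsWithin, hd.eventually_analyticAt.filter_mono nhdsWithin_le_nhds]
    with x (hx : x ≠ 0) hdx
  have hsplit : (fun y => f y / y) =ᶠ[𝓝 x] fun y => dslope f 0 y + f 0 * y⁻¹ := by
    filter_upwards [isOpen_ne.mem_nhds hx] with y hy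
    rw [dslope_of_ne _ hy, slope_def_field, sub_zero, ← div_eq_mul_inv, ← add_div, sub_add_cancel]
  rw [hsplit.deriv_eq, deriv_fun_add hdx.differentiableAt ((differentiableAt_inv hx).const_mul _),
    deriv_const_mul_field, deriv_inv, mul_neg, ← div_eq_mul_inv, neg_add_cancel_right]

end DSlope

section MellinExp

variable {r s : ℂ}

lemma isBigO_cexp_neg_mul_atTop (r : ℂ) :
    (fun t : ℝ => Complex.exp (-(r * t))) =O[atTop] fun t => Real.exp (-r.re * t) :=
  Asymptotics.isBigO_of_le _ fun t => by simp [Complex.norm_exp]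

lemma isBigO_cexp_neg_mul_nhdsGT_zero (r : ℂ) :
    (fun t : ℝ => Complex.exp (-(r * t))) =O[𝓝[>] 0] (· ^ (-(0 : ℝ))) := by
  simp only [neg_zero, Real.rpow_zero]
  have hcont : Continuous fun t : ℝ => Complex.exp (-(r * t)) := by fun_prop
  exact (hcont.continuousAt.tendsto.mono_left nhdsWithin_le_nhds).isBigO_one ℝ

lemma locallyIntegrableOn_cexp_neg_mul (r : ℂ) :
    LocallyIntegrableOn (fun t : ℝ => Complex.exp (-(r * t))) (Ioi 0) :=
  have hcont : Continuous fun t : ℝ => Complex.exp (-(r * t)) := by fun_prop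
  hcont.locallyIntegrable.locallyIntegrableOn _

lemma mellinConvergent_cexp_neg_mul (hr : 0 < r.re) (hs : 0 < s.re) :
    MellinConvergent (fun t : ℝ => Complex.exp (-(r * t))) s :=
  mellinConvergent_of_isBigO_rpow_exp hr (locallyIntegrableOn_cexp_neg_mul r)
    (isBigO_cexp_neg_mul_atTop r) (isBigO_cexp_neg_mul_nhdsGT_zero r) hs

lemma hasDerivAt_mellin_cexp_neg_mul (hr : 0 < r.re) (hs : 0 < s.re) :
    HasDerivAt (fun z => mellin (fun t : ℝ => Complex.exp (-(z * t))) s)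
      (-mellin (fun t : ℝ => Complex.exp (-(r * t))) (s + 1)) r := by
  have hs1 : 0 < (s + 1).re := by simpa using hs.trans (lt_add_one _)
  have hhalf : 0 < (r.re / 2 : ℂ).re := by simpa using hr
  have hdecay : ∀ᶠ z : ℂ in 𝓝 r, r.re / 2 < z.re :=
    Complex.continuous_re.continuousAt.eventually (lt_mem_nhds (half_lt_self hr))
  rw [mellin, ← integral_neg]
  refine (hasDerivAt_integral_of_dominated_loc_of_deriv_le
    (F := fun z (t : ℝ) => (t : ℂ) ^ (s - 1) • Complex.exp (-(z * t)))
    (F' := fun z (t : ℝ) => -((t : ℂ) ^ (s + 1 - 1) • Complex.exp (-(z * t)))) hdecay ?_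
    (mellinConvergent_cexp_neg_mul hr hs) (mellinConvergent_cexp_neg_mul hr hs1).neg.1 ?_
    (mellinConvergent_cexp_neg_mul hhalf hs1).norm ?_).2
  · filter_upwards [hdecay] with z hz
    exact (mellinConvergent_cexp_neg_mul ((half_pos hr).trans hz) hs).1
  · filter_upwards [ae_restrict_mem measurableSet_Ioi] with t (ht : 0 < t) z hz
    rw [norm_neg, norm_smul, norm_smul, Complex.norm_exp, Complex.norm_exp]
    refine mul_le_mul_of_nonneg_left (Real.exp_le_exp.2 ?_) (norm_nonneg _)
    simpa using mul_le_mul_of_nonneg_right (le_of_lt hz) ht.le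
  · filter_upwards [ae_restrict_mem measurableSet_Ioi] with t (ht : 0 < t) z _
    refine (((hasDerivAt_mul_const (t : ℂ)).fun_neg.cexp).const_smul
      ((t : ℂ) ^ (s - 1))).congr_deriv ?_
    rw [add_sub_right_comm, Complex.cpow_add _ _ (Complex.ofReal_ne_zero.2 ht.ne'),
      Complex.cpow_one]
    simp only [smul_eq_mul]
    ring

lemma mellin_cexp_neg_mul (hr : 0 < r.re) (hs : 0 < s.re) :
    mellin (fun t : ℝ => Complex.exp (-(r * t))) s = r ^ (-s) * Complex.Gamma s := by
  have hU : IsOpen {z : ℂ | 0 < z.re} := isOpen_lt continuous_const Complex.continuous_re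
  have hleft : DifferentiableOn ℂ (fun z => mellin (fun t : ℝ => Complex.exp (-(z * t))) s)
      {z | 0 < z.re} := fun z hz =>
    (hasDerivAt_mellin_cexp_neg_mul hz hs).differentiableAt.differentiableWithinAt
  have hright : DifferentiableOn ℂ (fun z => z ^ (-s) * Complex.Gamma s) {z | 0 < z.re} :=
    (differentiableOn_id.cpow_const fun z hz => Or.inl hz).mul_const _
  have hreal (x : ℝ) (hx : 0 < x) : mellin (fun t : ℝ => Complex.exp (-(x * t))) s =
      (x : ℂ) ^ (-s) * Complex.Gamma s := by
    simp only [mellin, smul_eq_mul]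
    rw [Complex.integral_cpow_mul_exp_neg_mul_Ioi hs hx, one_div, Complex.cpow_neg,
      Complex.inv_cpow _ _ (by simp [Complex.arg_ofReal_of_nonneg hx.le, Real.pi_ne_zero.symm])]
  have hembed : Tendsto ((↑) : ℝ → ℂ) (𝓝[≠] 1) (𝓝[≠] 1) :=
    Complex.continuous_ofReal.continuousAt.continuousWithinAt.tendsto_nhdsWithin
      fun x hx => by simpa using hx
  have hfreq : ∃ᶠ z : ℂ in 𝓝[≠] 1,
      mellin (fun t : ℝ => Complex.exp (-(z * t))) s = z ^ (-s) * Complex.Gamma s :=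
    hembed.frequently <| Eventually.frequently <|
      (eventually_nhdsWithin_of_eventually_nhds (lt_mem_nhds one_pos)).mono hreal
  exact (hleft.analyticOnNhd hU).eqOn_of_preconnected_of_frequently_eq (hright.analyticOnNhd hU)
    (convex_halfSpace_re_gt 0).isPreconnected (by simp) hfreq hr

lemma hasDerivAt_cpow_neg_mul_Gamma (hr : r ≠ 0) (hs : ∀ m : ℕ, s ≠ -m) :
    HasDerivAt (fun z => r ^ (-z) * Complex.Gamma z)
      (r ^ (-s) * (deriv Complex.Gamma s - Complex.log r * Complex.Gamma s)) s :=
  (((hasDerivAt_neg s).const_cpow (Or.inl hr)).mul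
    (Complex.differentiableAt_Gamma s hs).hasDerivAt).congr_deriv (by ring)

lemma hasMellin_log_smul_cexp_neg_mul (hr : 0 < r.re) (hs : 0 < s.re) :
    HasMellin (fun t : ℝ => Real.log t • Complex.exp (-(r * t))) s
      (r ^ (-s) * (deriv Complex.Gamma s - Complex.log r * Complex.Gamma s)) := by
  obtain ⟨hconv, hderiv⟩ := mellin_hasDerivAt_of_isBigO_rpow (locallyIntegrableOn_cexp_neg_mul r)
    ((isBigO_cexp_neg_mul_atTop r).trans (isLittleO_exp_neg_mul_rpow_atTop hr _).isBigO)
    (lt_add_one s.re) (isBigO_cexp_neg_mul_nhdsGT_zero r) hs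
  have hclosed : mellin (fun t : ℝ => Complex.exp (-(r * t))) =ᶠ[𝓝 s]
      fun z => r ^ (-z) * Complex.Gamma z := by
    filter_upwards [Complex.continuous_re.continuousAt.eventually (lt_mem_nhds hs)] with z hz
    exact mellin_cexp_neg_mul hr hz
  have hr0 : r ≠ 0 := fun h => hr.ne' (by simp [h])
  exact ⟨hconv, hderiv.unique ((hasDerivAt_cpow_neg_mul_Gamma hr0
    (ne_neg_natCast_of_re_pos hs)).congr_of_eventuallyEq hclosed)⟩

end MellinExp

section MellinCos

/-- The Mellin transform `∫₀^∞ cos (a x) x ^ (s - 1) dx` of `cos (a ·)`, `0 < s < 1`, given by its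
closed form. -/
noncomputable def mellinCos (a s : ℝ) : ℝ :=
  Real.Gamma s * Real.cos (Real.pi / 2 * s) * a ^ (-s)

/-- The analytic continuation of `s * mellinCos a s` through the simple pole of `mellinCos a`
at `0`. -/
noncomputable def mellinCosReg (a s : ℝ) : ℝ :=
  Real.Gamma (1 + s) * (Real.cos (Real.pi / 2 * s) * a ^ (-s))

variable {a μ ε : ℝ}

lemma mellinCos_eq_re_cpow_mul_Gamma (ha : 0 < a) (s : ℝ) :
    mellinCos a s = ((-(a * Complex.I)) ^ (-(s : ℂ)) * Complex.Gamma s).re := by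
  have hne : -(a * Complex.I) ≠ 0 := by simp [ha.ne']
  have hlog : Complex.log (-(a * Complex.I)) = Real.log a - Real.pi / 2 * Complex.I := by
    rw [← mul_neg, Complex.log_ofReal_mul ha (by simp), Complex.log_neg_I]
    ring
  have hre : ((Real.log a - Real.pi / 2 * Complex.I) * -(s : ℂ)).re = Real.log a * -s := by simp
  have him : ((Real.log a - Real.pi / 2 * Complex.I) * -(s : ℂ)).im = Real.pi / 2 * s := by simp
  rw [Complex.cpow_def_of_ne_zero hne, hlog, Complex.Gamma_ofReal, Complex.re_mul_ofReal,
    Complex.exp_re, hre, him, mellinCos, Real.rpow_def_of_pos ha]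
  ring

lemma re_cpow_smul_log_smul_cexp {x : ℝ} (hx : 0 < x) (a μ ε : ℝ) :
    ((x : ℂ) ^ ((μ : ℂ) - 1) • Real.log x • Complex.exp (-((ε - a * Complex.I) * x))).re =
      Real.exp (-(ε * x)) • (Real.cos (a * x) * x ^ (μ - 1) * Real.log x) := by
  have hpow : (x : ℂ) ^ ((μ : ℂ) - 1) = (x ^ (μ - 1) : ℝ) := by
    rw [Complex.ofReal_cpow hx.le]
    simp
  have hre : (-((ε - a * Complex.I) * x)).re = -(ε * x) := by simp
  have him : (-((ε - a * Complex.I) * x)).im = a * x := by simp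
  rw [hpow, smul_eq_mul, Complex.re_ofReal_mul, Complex.smul_re, Complex.exp_re, hre, him,
    smul_eq_mul, smul_eq_mul]
  ring

lemma integrableOn_exp_neg_mul_smul_cos_mul_rpow_mul_log (hε : 0 < ε) (hμ : 0 < μ) (a : ℝ) :
    IntegrableOn (fun x => Real.exp (-(ε * x)) • (Real.cos (a * x) * x ^ (μ - 1) * Real.log x))
      (Ioi 0) := by
  have hconv := (hasMellin_log_smul_cexp_neg_mul (r := ε - a * Complex.I) (s := μ)
    (by simpa) (by simpa)).1
  exact IntegrableOn.congr_fun hconv.re (fun x hx => re_cpow_smul_log_smul_cexp hx a μ ε)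
    measurableSet_Ioi

lemma integral_exp_neg_mul_smul_cos_mul_rpow_mul_log (hε : 0 < ε) (hμ : 0 < μ) (a : ℝ) :
    ∫ x in Ioi 0, Real.exp (-(ε * x)) • (Real.cos (a * x) * x ^ (μ - 1) * Real.log x) =
      ((ε - a * Complex.I) ^ (-(μ : ℂ)) * (deriv Complex.Gamma μ -
        Complex.log (ε - a * Complex.I) * Complex.Gamma μ)).re := by
  obtain ⟨hconv, hval⟩ := hasMellin_log_smul_cexp_neg_mul (r := ε - a * Complex.I) (s := μ)
    (by simpa) (by simpa)
  rw [← hval]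
  exact (setIntegral_congr_fun measurableSet_Ioi fun x hx =>
    (re_cpow_smul_log_smul_cexp hx a μ ε).symm).trans (integral_re hconv)

lemma hasDerivAt_mellinCos_of_tendsto {L : ℝ} (ha : 0 < a) (hμ : 0 < μ)
    (hL : Tendsto (fun T : ℝ => ∫ x in (0 : ℝ)..T, Real.cos (a * x) * x ^ (μ - 1) * Real.log x)
      atTop (𝓝 L)) :
    HasDerivAt (mellinCos a) L μ := by
  have hslit : -(a * Complex.I) ∈ Complex.slitPlane := Or.inr (by simpa using ha.ne')
  have habel : Tendsto (fun ε : ℝ => ((ε - a * Complex.I) ^ (-(μ : ℂ)) * (deriv Complex.Gamma μ -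
      Complex.log (ε - a * Complex.I) * Complex.Gamma μ)).re) (𝓝[>] 0) (𝓝 L) := by
    refine (tendsto_integral_Ioi_exp_neg_mul_smul_of_tendsto (fun ε hε =>
      integrableOn_exp_neg_mul_smul_cos_mul_rpow_mul_log hε hμ a) hL).congr' ?_
    filter_upwards [self_mem_nhdsWithin] with ε hε
      using integral_exp_neg_mul_smul_cos_mul_rpow_mul_log hε hμ a
  have hcont : ContinuousAt (fun r : ℂ => (r ^ (-(μ : ℂ)) *
      (deriv Complex.Gamma μ - Complex.log r * Complex.Gamma μ)).re) (-(a * Complex.I)) :=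
    Complex.continuous_re.continuousAt.comp ((continuousAt_cpow_const hslit).mul
      (continuousAt_const.sub ((continuousAt_clog hslit).mul_const _)))
  have hpath : Tendsto (fun ε : ℝ => (ε : ℂ) - a * Complex.I) (𝓝[>] 0) (𝓝 (-(a * Complex.I))) :=
    ((by fun_prop : Continuous fun ε : ℝ => (ε : ℂ) - a * Complex.I).tendsto' 0 _
      (by simp)).mono_left nhdsWithin_le_nhds
  rw [tendsto_nhds_unique habel (hcont.tendsto.comp hpath),
    funext (mellinCos_eq_re_cpow_mul_Gamma ha)]
  exact (hasDerivAt_cpow_neg_mul_Gamma (Complex.slitPlane_ne_zero hslit)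
    (ne_neg_natCast_of_re_pos (by simpa))).real_of_complex

lemma mellinCos_eq_mellinCosReg_div {s : ℝ} (hs : s ≠ 0) (a : ℝ) :
    mellinCos a s = mellinCosReg a s / s := by
  rw [eq_div_iff hs, mellinCos, mellinCosReg, add_comm, Real.Gamma_add_one hs]
  ring

lemma mellinCosReg_zero (a : ℝ) : mellinCosReg a 0 = 1 := by
  simp [mellinCosReg]

lemma analyticAt_rpow_neg (ha : 0 < a) (s : ℝ) : AnalyticAt ℝ (fun s => a ^ (-s)) s := by
  simp only [Real.rpow_def_of_pos ha]
  fun_prop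

lemma iteratedDeriv_rpow_neg_zero (ha : 0 < a) (n : ℕ) :
    iteratedDeriv n (fun s : ℝ => a ^ (-s)) 0 = (-Real.log a) ^ n := by
  have hexp : (fun s : ℝ => a ^ (-s)) = fun s => Real.exp (-Real.log a * s) := by
    ext s
    rw [Real.rpow_def_of_pos ha, neg_mul_comm]
  rw [hexp, iteratedDeriv_exp_const_mul]
  simp

lemma deriv_rpow_neg_zero (ha : 0 < a) : deriv (fun s : ℝ => a ^ (-s)) 0 = -Real.log a := by
  simpa using iteratedDeriv_rpow_neg_zero ha 1

lemma analyticAt_mellinCosReg_zero (ha : 0 < a) : AnalyticAt ℝ (mellinCosReg a) 0 :=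
  ((analyticAt_realGamma_of_pos (by simp)).comp (by fun_prop)).mul
    (AnalyticAt.mul (by fun_prop) (analyticAt_rpow_neg ha 0))

lemma deriv_cos_const_mul_zero (c : ℝ) : deriv (fun s : ℝ => Real.cos (c * s)) 0 = 0 := by
  simpa using congrFun (iteratedDeriv_comp_const_mul (n := 1) Real.contDiff_cos c) 0

lemma iteratedDeriv_two_cos_const_mul_zero (c : ℝ) :
    iteratedDeriv 2 (fun s : ℝ => Real.cos (c * s)) 0 = -c ^ 2 := by
  simp [iteratedDeriv_comp_const_mul Real.contDiff_cos, Real.iteratedDeriv_even_cos 1]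

lemma deriv_cos_const_mul_mul_rpow_neg_zero (ha : 0 < a) (c : ℝ) :
    deriv (fun s : ℝ => Real.cos (c * s) * a ^ (-s)) 0 = -Real.log a := by
  rw [deriv_fun_mul (by fun_prop) (analyticAt_rpow_neg ha 0).differentiableAt,
    deriv_cos_const_mul_zero, deriv_rpow_neg_zero ha]
  simp

lemma iteratedDeriv_two_cos_const_mul_mul_rpow_neg_zero (ha : 0 < a) (c : ℝ) :
    iteratedDeriv 2 (fun s : ℝ => Real.cos (c * s) * a ^ (-s)) 0 = Real.log a ^ 2 - c ^ 2 := by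
  rw [iteratedDeriv_two_fun_mul (by fun_prop) (analyticAt_rpow_neg ha 0).contDiffAt,
    deriv_cos_const_mul_zero, iteratedDeriv_two_cos_const_mul_zero,
    iteratedDeriv_rpow_neg_zero ha, mul_zero, Real.cos_zero, neg_zero, Real.rpow_zero]
  ring

lemma iteratedDeriv_two_mellinCosReg_zero (ha : 0 < a) :
    iteratedDeriv 2 (mellinCosReg a) 0 =
      (Real.eulerMascheroniConstant + Real.log a) ^ 2 - Real.pi ^ 2 / 12 := by
  have hΓ : ContDiffAt ℝ 2 (fun s => Real.Gamma (1 + s)) 0 :=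
    ((analyticAt_realGamma_of_pos (by simp)).comp (by fun_prop)).contDiffAt
  have hfactor : ContDiffAt ℝ 2 (fun s : ℝ => Real.cos (Real.pi / 2 * s) * a ^ (-s)) 0 :=
    ContDiffAt.mul (by fun_prop) (analyticAt_rpow_neg ha 0).contDiffAt
  unfold mellinCosReg
  rw [iteratedDeriv_two_fun_mul hΓ hfactor, deriv_cos_const_mul_mul_rpow_neg_zero ha,
    iteratedDeriv_two_cos_const_mul_mul_rpow_neg_zero ha]
  simp only [deriv_comp_const_add, iteratedDeriv_comp_const_add, add_zero, Real.Gamma_one,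
    Real.hasDerivAt_Gamma_one.deriv, iteratedDeriv_two_Gamma_one, mul_zero, Real.cos_zero,
    neg_zero, Real.rpow_zero]
  ring

end MellinCos

/-- For `a > 0`: if `F μ` denotes the improper integral
`∫₀^∞ cos(ax) x^{μ-1} ln x dx` (for `0 < μ < 1`), then
`F μ + 1/μ² → -π²/24 + γ(γ/2 + ln a) + (ln a)²/2` as `μ → 0⁺`. -/
theorem cos_log_integral_mu_limit (a : ℝ) (ha : 0 < a) (F : ℝ → ℝ)
    (hF : ∀ μ : ℝ, 0 < μ → μ < 1 →
      Tendsto (fun T : ℝ => ∫ x in (0 : ℝ)..T, Real.cos (a * x) * x ^ (μ - 1) * Real.log x)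
        atTop (nhds (F μ))) :
    Tendsto (fun μ : ℝ => F μ + 1 / μ ^ 2) (nhdsWithin 0 (Set.Ioi 0))
      (nhds (-Real.pi ^ 2 / 24 +
        Real.eulerMascheroniConstant * (Real.eulerMascheroniConstant / 2 + Real.log a) +
        Real.log a ^ 2 / 2)) := by
  have hlim := (tendsto_deriv_div_add_div_sq (analyticAt_mellinCosReg_zero ha)).mono_left
    (nhdsGT_le_nhdsNE 0)
  rw [mellinCosReg_zero, iteratedDeriv_two_mellinCosReg_zero ha] at hlim
  have hF_eq : ∀ᶠ μ in 𝓝[>] (0 : ℝ), deriv (fun s => mellinCosReg a s / s) μ = F μ := by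
    filter_upwards [Ioo_mem_nhdsGT one_pos] with μ ⟨hμ0, hμ1⟩
    have hdiv : mellinCos a =ᶠ[𝓝 μ] fun s => mellinCosReg a s / s := by
      filter_upwards [isOpen_ne.mem_nhds hμ0.ne'] with s hs
      exact mellinCos_eq_mellinCosReg_div hs a
    rw [← hdiv.deriv_eq, (hasDerivAt_mellinCos_of_tendsto ha hμ0 (hF μ hμ0 hμ1)).deriv]
  convert hlim.congr' (hF_eq.mono fun μ hμ => by rw [hμ]) using 2
  ring
end
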